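/- arXiv:0911.4080 — 6 statements merged into one kernel-verified Lean document; each statement's English description precedes it below -/
import Mathlib

section
/- Consider the noise-free linear model Y = Xβ, where X is an n×p real matrix whose columns all have unit Euclidean norm, β ∈ ℝ^p has support S = {j : β_j ≠ 0} of size s with 1 ≤ s < p, and N = {1,…,p} \ S. Assume: (E') the minimum eigenvalue of C_SS is at least λ₀ for some constant λ₀ > 0; (I') ‖C_NS C_SS^{-1}‖_∞ ≤ 1 − η for some constant 0 < η < 1; and (J') the tuning parameter satisfies 0 ≤ λ < ρ / ‖C_SS^{-1}‖_∞. Then for every such β with β_S ∈ M_ρ^s, there exists a vector β̂ ∈ ℝ^p minimizing the lasso objective b ↦ ‖Y − Xb‖₂² + λ‖b‖₁ over ℝ^p such that sgn(β̂_j) = sgn(β_j) for every j ∈ {1,…,p}. -/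
open Matrix

/-- The lasso objective `b ↦ ‖Y − Xb‖₂² + λ‖b‖₁`. -/
noncomputable def lassoObj {n p : ℕ} (X : Matrix (Fin n) (Fin p) ℝ) (Y : Fin n → ℝ)
    (lam : ℝ) (b : Fin p → ℝ) : ℝ :=
  ∑ i, (Y i - ∑ j, X i j * b j) ^ 2 + lam * ∑ j, |b j|

/-- The signal block `C_SS` of the Gram matrix `C = XᵀX`, indexed by the support of `β`. -/
noncomputable def CssMat {n p : ℕ} (X : Matrix (Fin n) (Fin p) ℝ) (β : Fin p → ℝ) :
    Matrix {j : Fin p // β j ≠ 0} {j : Fin p // β j ≠ 0} ℝ :=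
  Matrix.of fun a b => (Xᵀ * X) a.1 b.1

/-- The noise-signal block `C_NS` of the Gram matrix `C = XᵀX`. -/
noncomputable def CnsMat {n p : ℕ} (X : Matrix (Fin n) (Fin p) ℝ) (β : Fin p → ℝ) :
    Matrix {j : Fin p // β j = 0} {j : Fin p // β j ≠ 0} ℝ :=
  Matrix.of fun a b => (Xᵀ * X) a.1 b.1

/-!
The candidate minimizer is known explicitly: it is `β - (λ/2) u`, where `u` is supported on `S`
and `C_SS u_S = sgn β_S`. The residual at this point is `(λ/2) X u`, so the optimality conditions
say that `C u` is a subgradient of the ℓ¹ norm there. On `S` this vector is `sgn β_S`, which is the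
sign of the candidate as soon as `(λ/2) |u_S| < |β_S|` entrywise; off `S` it is
`C_NS C_SS⁻¹ sgn β_S`, which the irrepresentability condition bounds by one.
-/

section Sign

theorem abs_realSign_le_one (x : ℝ) : |Real.sign x| ≤ 1 := by
  rcases Real.sign_apply_eq x with h | h | h <;> simp [h]

theorem realSign_mul_self (x : ℝ) : Real.sign x * x = |x| := by
  rcases lt_trichotomy x 0 with hx | rfl | hx
  · rw [Real.sign_of_neg hx, abs_of_neg hx, neg_one_mul]
  · simp
  · rw [Real.sign_of_pos hx, abs_of_pos hx, one_mul]

theorem realSign_sub_eq_of_abs_lt {x d : ℝ} (h : |d| < |x|) :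
    Real.sign (x - d) = Real.sign x := by
  obtain ⟨hd₁, hd₂⟩ := abs_lt.mp h
  rcases lt_or_gt_of_ne (abs_pos.mp ((abs_nonneg d).trans_lt h)) with hx | hx
  · rw [abs_of_neg hx] at hd₁
    rw [Real.sign_of_neg hx, Real.sign_of_neg (by linarith)]
  · rw [abs_of_pos hx] at hd₂
    rw [Real.sign_of_pos hx, Real.sign_of_pos (by linarith)]

theorem mul_sub_le_abs_sub_abs {R : Type*} [CommRing R] [LinearOrder R] [IsStrictOrderedRing R]
    {z x : R} (hz : |z| ≤ 1) (hzx : z * x = |x|) (t : R) :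
    z * (t - x) ≤ |t| - |x| := by
  have hzt : z * t ≤ |t| := calc
    z * t ≤ |z| * |t| := (le_abs_self _).trans_eq (abs_mul z t)
    _ ≤ |t| := mul_le_of_le_one_left (abs_nonneg t) hz
  rw [mul_sub, hzx]
  exact sub_le_sub_right hzt _

end Sign

section LinearAlgebra

variable {m ι κ R : Type*}

theorem mulVec_extend_zero [NonUnitalNonAssocSemiring R] [Fintype ι] [Fintype κ]
    (A : Matrix m ι R) {f : κ → ι} (hf : Function.Injective f) (v : κ → R) :
    A *ᵥ Function.extend f v 0 = A.submatrix id f *ᵥ v := by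
  ext i
  refine (Fintype.sum_of_injective f hf _ _ (fun j hj => ?_) fun k => ?_).symm
  · rw [Function.extend_apply' _ _ _ hj, Pi.zero_apply, mul_zero]
  · rw [hf.extend_apply]
    rfl

theorem isUnit_of_dotProduct_mulVec_ne_zero [Field R] [Fintype ι] [DecidableEq ι]
    {A : Matrix ι ι R} (hA : ∀ v ≠ 0, v ⬝ᵥ A *ᵥ v ≠ 0) : IsUnit A := by
  rw [← mulVec_injective_iff_isUnit, ← coe_mulVecLin, injective_iff_map_eq_zero]
  intro v hv
  by_contra hv₀
  refine hA v hv₀ ?_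
  rw [← mulVecLin_apply, hv, dotProduct_zero]

theorem dotProduct_self_nonneg [Semiring R] [LinearOrder R] [IsStrictOrderedRing R]
    [ExistsAddOfLE R] [Fintype ι] (v : ι → R) : 0 ≤ v ⬝ᵥ v :=
  Finset.sum_nonneg fun i _ => mul_self_nonneg (v i)

theorem isUnit_of_coercive [Field R] [LinearOrder R] [IsStrictOrderedRing R]
    [Fintype ι] [DecidableEq ι] {A : Matrix ι ι R} {c : R} (hc : 0 < c)
    (hA : ∀ v : ι → R, c * (v ⬝ᵥ v) ≤ v ⬝ᵥ A *ᵥ v) : IsUnit A :=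
  isUnit_of_dotProduct_mulVec_ne_zero fun v hv => by
    have hv_pos : 0 < v ⬝ᵥ v :=
      (dotProduct_self_nonneg v).lt_of_ne' (dotProduct_self_eq_zero.not.mpr hv)
    exact ((mul_pos hc hv_pos).trans_le (hA v)).ne'

theorem abs_mulVec_apply_le_sum_abs [CommRing R] [LinearOrder R] [IsStrictOrderedRing R]
    [Fintype ι] (A : Matrix m ι R) {v : ι → R} (hv : ∀ k, |v k| ≤ 1) (i : m) :
    |(A *ᵥ v) i| ≤ ∑ k, |A i k| := calc
  |∑ k, A i k * v k| ≤ ∑ k, |A i k * v k| := Finset.abs_sum_le_sum_abs _ _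
  _ ≤ ∑ k, |A i k| := Finset.sum_le_sum fun k _ => by
    rw [abs_mul]
    exact mul_le_of_le_one_right (abs_nonneg _) (hv k)

theorem residual_sq_sub_gradient_le [CommRing R] [LinearOrder R] [IsStrictOrderedRing R]
    [Fintype m] [Fintype ι] (X : Matrix m ι R) (Y : m → R) (c b : ι → R) :
    (Y - X *ᵥ c) ⬝ᵥ (Y - X *ᵥ c) - 2 * ((Xᵀ *ᵥ (Y - X *ᵥ c)) ⬝ᵥ (b - c)) ≤
      (Y - X *ᵥ b) ⬝ᵥ (Y - X *ᵥ b) := by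
  have hb : Y - X *ᵥ b = (Y - X *ᵥ c) - X *ᵥ (b - c) := by
    rw [mulVec_sub, sub_sub, add_sub_cancel]
  rw [hb, mulVec_transpose, ← dotProduct_mulVec]
  generalize Y - X *ᵥ c = r, X *ᵥ (b - c) = e
  rw [sub_dotProduct, dotProduct_sub, dotProduct_sub, dotProduct_comm e r]
  linarith [dotProduct_self_nonneg e]

end LinearAlgebra

section Lasso

variable {n p : ℕ} (X : Matrix (Fin n) (Fin p) ℝ)

theorem lassoObj_eq_dotProduct (Y : Fin n → ℝ) (lam : ℝ) (b : Fin p → ℝ) :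
    lassoObj X Y lam b = (Y - X *ᵥ b) ⬝ᵥ (Y - X *ᵥ b) + lam * ∑ j, |b j| := by
  simp only [lassoObj, dotProduct, mulVec, Pi.sub_apply, sq]

theorem lassoObj_le_of_stationary {Y : Fin n → ℝ} {lam : ℝ} (hlam : 0 ≤ lam)
    {c z : Fin p → ℝ} (hstat : Xᵀ *ᵥ (Y - X *ᵥ c) = (lam / 2) • z)
    (hz : ∀ j, |z j| ≤ 1) (hzc : ∀ j, z j * c j = |c j|) (b : Fin p → ℝ) :
    lassoObj X Y lam c ≤ lassoObj X Y lam b := by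
  have hsubgrad : z ⬝ᵥ (b - c) ≤ ∑ j, |b j| - ∑ j, |c j| := by
    rw [← Finset.sum_sub_distrib]
    exact Finset.sum_le_sum fun j _ => mul_sub_le_abs_sub_abs (hz j) (hzc j) (b j)
  have hsq := residual_sq_sub_gradient_le X Y c b
  rw [hstat, smul_dotProduct, smul_eq_mul] at hsq
  rw [lassoObj_eq_dotProduct, lassoObj_eq_dotProduct]
  linarith [mul_le_mul_of_nonneg_left hsubgrad hlam]

/-- The vector `sgn β_S`, indexed by the support `S` of `β`. -/
noncomputable def supportSign (β : Fin p → ℝ) : {j : Fin p // β j ≠ 0} → ℝ :=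
  fun j => Real.sign (β j)

/-- The direction `u` in which the lasso shrinks `β`: it equals `C_SS⁻¹ sgn β_S` on the support `S`
of `β` and vanishes off `S`. The lasso solution is `β - (λ/2) u`. -/
noncomputable def shrinkDirection (β : Fin p → ℝ) : Fin p → ℝ :=
  Function.extend Subtype.val ((CssMat X β)⁻¹ *ᵥ supportSign β) 0

variable {β : Fin p → ℝ}

theorem shrinkDirection_coe (j : {j : Fin p // β j ≠ 0}) :
    shrinkDirection X β j = ((CssMat X β)⁻¹ *ᵥ supportSign β) j :=
  Subtype.val_injective.extend_apply _ _ j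

theorem shrinkDirection_of_eq_zero {j : Fin p} (hj : β j = 0) : shrinkDirection X β j = 0 :=
  Function.extend_apply' _ _ _ fun ⟨k, hk⟩ => k.2 (hk ▸ hj)

theorem gram_mulVec_shrinkDirection_of_ne_zero (hS : IsUnit (CssMat X β)) {j : Fin p}
    (hj : β j ≠ 0) : ((Xᵀ * X) *ᵥ shrinkDirection X β) j = Real.sign (β j) := by
  have hCss : CssMat X β *ᵥ ((CssMat X β)⁻¹ *ᵥ supportSign β) = supportSign β := by
    rw [mulVec_mulVec, mul_nonsing_inv _ ((isUnit_iff_isUnit_det _).mp hS), one_mulVec]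
  rw [shrinkDirection, mulVec_extend_zero _ Subtype.val_injective]
  exact congrFun hCss ⟨j, hj⟩

theorem gram_mulVec_shrinkDirection_of_eq_zero (j : {j : Fin p // β j = 0}) :
    ((Xᵀ * X) *ᵥ shrinkDirection X β) j =
      ((CnsMat X β * (CssMat X β)⁻¹) *ᵥ supportSign β) j := by
  rw [shrinkDirection, mulVec_extend_zero _ Subtype.val_injective, ← mulVec_mulVec]
  rfl

theorem realSign_sub_smul_shrinkDirection {μ : ℝ}
    (hβ : ∀ j, |μ * ((CssMat X β)⁻¹ *ᵥ supportSign β) j| < |β j|) (j : Fin p) :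
    Real.sign ((β - μ • shrinkDirection X β) j) = Real.sign (β j) := by
  rw [Pi.sub_apply, Pi.smul_apply, smul_eq_mul]
  by_cases hj : β j = 0
  · rw [shrinkDirection_of_eq_zero X hj, mul_zero, sub_zero]
  · have hshift := hβ ⟨j, hj⟩
    rw [← shrinkDirection_coe] at hshift
    exact realSign_sub_eq_of_abs_lt hshift

theorem lassoObj_sub_smul_shrinkDirection_le {lam : ℝ} (hlam : 0 ≤ lam)
    (hS : IsUnit (CssMat X β))
    (hN : ∀ i, |((CnsMat X β * (CssMat X β)⁻¹) *ᵥ supportSign β) i| ≤ 1)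
    (hβ : ∀ j, |lam / 2 * ((CssMat X β)⁻¹ *ᵥ supportSign β) j| < |β j|) (b : Fin p → ℝ) :
    lassoObj X (X *ᵥ β) lam (β - (lam / 2) • shrinkDirection X β) ≤
      lassoObj X (X *ᵥ β) lam b := by
  refine lassoObj_le_of_stationary X hlam (z := (Xᵀ * X) *ᵥ shrinkDirection X β) ?_
    (fun j => ?_) (fun j => ?_) b
  · rw [← mulVec_sub, sub_sub_cancel, mulVec_smul, mulVec_smul, mulVec_mulVec]
  · by_cases hj : β j = 0
    · rw [gram_mulVec_shrinkDirection_of_eq_zero X ⟨j, hj⟩]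
      exact hN ⟨j, hj⟩
    · rw [gram_mulVec_shrinkDirection_of_ne_zero X hS hj]
      exact abs_realSign_le_one _
  · by_cases hj : β j = 0
    · simp [hj, shrinkDirection_of_eq_zero X hj]
    · rw [gram_mulVec_shrinkDirection_of_ne_zero X hS hj,
        ← realSign_sub_smul_shrinkDirection X hβ j, realSign_mul_self]

theorem isUnit_cssMat_of_coercive {c : ℝ} (hc : 0 < c)
    (hE : ∀ v : {j : Fin p // β j ≠ 0} → ℝ,
      c * ∑ a, (v a) ^ 2 ≤ ∑ a, ∑ b, v a * CssMat X β a b * v b) :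
    IsUnit (CssMat X β) := by
  refine isUnit_of_coercive hc fun v => ?_
  simpa only [dotProduct, mulVec, Finset.mul_sum, mul_assoc, sq] using hE v

theorem abs_supportSign_le_one (j : {j : Fin p // β j ≠ 0}) : |supportSign β j| ≤ 1 :=
  abs_realSign_le_one _

theorem abs_cssMat_inv_mulVec_supportSign_le (j : {j : Fin p // β j ≠ 0}) :
    |((CssMat X β)⁻¹ *ᵥ supportSign β) j| ≤ ⨆ a, ∑ b, |(CssMat X β)⁻¹ a b| :=
  (abs_mulVec_apply_le_sum_abs _ abs_supportSign_le_one j).trans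
    (le_ciSup (f := fun a => ∑ b, |(CssMat X β)⁻¹ a b|) (Set.finite_range _).bddAbove j)

end Lasso

theorem stmt_0_general {n p : ℕ} (X : Matrix (Fin n) (Fin p) ℝ) (β : Fin p → ℝ) {lam : ℝ}
    (hlam : 0 ≤ lam) (hS : IsUnit (CssMat X β))
    (hN : ∀ i, |((CnsMat X β * (CssMat X β)⁻¹) *ᵥ supportSign β) i| ≤ 1)
    (hβ : ∀ j, |lam / 2 * ((CssMat X β)⁻¹ *ᵥ supportSign β) j| < |β j|) :
    ∃ βhat : Fin p → ℝ,
      (∀ b, lassoObj X (X.mulVec β) lam βhat ≤ lassoObj X (X.mulVec β) lam b) ∧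
      ∀ j, Real.sign (βhat j) = Real.sign (β j) :=
  ⟨β - (lam / 2) • shrinkDirection X β, lassoObj_sub_smul_shrinkDirection_le X hlam hS hN hβ,
    realSign_sub_smul_shrinkDirection X hβ⟩

/-- Theorem 1 of the paper. In the noise-free model `Y = Xβ` with unit-norm
design columns, support `S` of size `1 ≤ s < p`, Conditions E' (minimum eigenvalue of `C_SS`
at least `λ₀ > 0`), I' (`‖C_NS C_SS⁻¹‖_∞ ≤ 1 − η`) and J' (`0 ≤ λ < ρ/‖C_SS⁻¹‖_∞`), for every
such `β` with `β_S ∈ M_ρ^s` there is a lasso minimizer `β̂` with `sgn β̂ = sgn β`. -/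
theorem stmt_0 {n p : ℕ} (X : Matrix (Fin n) (Fin p) ℝ) (β : Fin p → ℝ)
    (ρ lam0 η lam : ℝ) (hρ : 0 < ρ) (hlam0 : 0 < lam0) (hη : 0 < η) (hη1 : η < 1)
    (hlam : 0 ≤ lam)
    (hcols : ∀ j, ∑ i, (X i j) ^ 2 = 1)
    (hs1 : 1 ≤ Fintype.card {j : Fin p // β j ≠ 0})
    (hsp : Fintype.card {j : Fin p // β j ≠ 0} < p)
    (hM : ∀ j, β j ≠ 0 → ρ ≤ |β j|)
    -- Condition E': the minimum eigenvalue of `C_SS` is at least `λ₀`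
    (hE' : ∀ v : {j : Fin p // β j ≠ 0} → ℝ,
      lam0 * ∑ a, (v a) ^ 2 ≤ ∑ a, ∑ b, v a * CssMat X β a b * v b)
    -- Condition I': `‖C_NS C_SS⁻¹‖_∞ ≤ 1 − η`
    (hI' : ∀ i, ∑ b, |(CnsMat X β * (CssMat X β)⁻¹) i b| ≤ 1 - η)
    -- Condition J': `λ < ρ / ‖C_SS⁻¹‖_∞`
    (hJ' : lam * (⨆ a, ∑ b, |(CssMat X β)⁻¹ a b|) < ρ) :
    ∃ βhat : Fin p → ℝ,
      (∀ b, lassoObj X (X.mulVec β) lam βhat ≤ lassoObj X (X.mulVec β) lam b) ∧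
      ∀ j, Real.sign (βhat j) = Real.sign (β j) := by
  refine stmt_0_general X β hlam (isUnit_cssMat_of_coercive X hlam0 hE') (fun i => ?_) fun j => ?_
  · linarith [hI' i, abs_mulVec_apply_le_sum_abs (CnsMat X β * (CssMat X β)⁻¹)
      abs_supportSign_le_one i]
  · have hw := mul_le_mul_of_nonneg_left (abs_cssMat_inv_mulVec_supportSign_le X j) hlam
    rw [abs_mul, abs_of_nonneg (div_nonneg hlam zero_le_two)]
    linarith [hM j j.2]
end

section
/- Let C be an s×s real symmetric positive definite matrix that is not diagonal (i.e., C has at least one nonzero off-diagonal entry), and let ρ > 0. Then there exists β ∈ ℝ^s with |β_j| ≥ ρ for every 1 ≤ j ≤ s such that the vector Cβ has at least one zero component, i.e., min |Cβ| = 0. -/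
/-!
The solutions of one linear equation `c ⬝ᵥ β = 0` with at least two nonzero coefficients form a
subspace contained in no coordinate hyperplane. Over an infinite field a vector space is not a
finite union of proper subspaces, so some solution has no zero coordinate, and a large multiple of
it has all coordinates of norm at least `ρ`. A positive definite matrix that is not diagonal has a
row with two nonzero entries, because its diagonal entries are positive.
-/

open Function Matrix

section LinearForm

variable {K ι : Type*} [Field K] [Fintype ι] {c : ι → K}

theorem exists_dotProduct_eq_zero_and_apply_ne_zero (hc : (support c).Nontrivial) (k : ι) :
    ∃ β, c ⬝ᵥ β = 0 ∧ β k ≠ 0 := by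
  classical
  obtain ⟨l, hl, hlk⟩ := hc.exists_ne k
  refine ⟨Pi.single k (c l) - Pi.single l (c k), ?_, ?_⟩
  · rw [dotProduct_sub, dotProduct_single, dotProduct_single, mul_comm, sub_self]
  · simpa [hlk.symm] using hl

theorem exists_dotProduct_eq_zero_and_forall_ne_zero [Infinite K]
    (hc : (support c).Nontrivial) : ∃ β, c ⬝ᵥ β = 0 ∧ ∀ k, β k ≠ 0 :=
  Module.Dual.exists_forall_mem_ne_zero_of_forall_exists
    (p := LinearMap.ker (dotProductBilin K K c)) (f := LinearMap.proj)
    (exists_dotProduct_eq_zero_and_apply_ne_zero hc)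

end LinearForm

section NormedField

variable {𝕜 n : Type*} [NontriviallyNormedField 𝕜]

theorem exists_forall_le_norm_smul_apply [Finite n] {β : n → 𝕜} (hβ : ∀ k, β k ≠ 0) (ρ : ℝ) :
    ∃ t : 𝕜, ∀ k, ρ ≤ ‖(t • β) k‖ := by
  obtain ⟨M, hM⟩ := (Set.finite_range fun k ↦ ρ / ‖β k‖).bddAbove
  obtain ⟨t, ht⟩ := NormedField.exists_lt_norm 𝕜 M
  refine ⟨t, fun k ↦ ?_⟩
  have hkt : ρ / ‖β k‖ ≤ ‖t‖ := (hM ⟨k, rfl⟩).trans ht.le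
  rwa [div_le_iff₀ (norm_pos_iff.mpr (hβ k)), ← norm_mul] at hkt

theorem stmt_1_general {m : Type*} [Fintype n] (C : Matrix m n 𝕜)
    (hC : ∃ i, (support (C i)).Nontrivial) (ρ : ℝ) :
    ∃ β : n → 𝕜, (∀ j, ρ ≤ ‖β j‖) ∧ ∃ i, (C *ᵥ β) i = 0 := by
  obtain ⟨i, hi⟩ := hC
  obtain ⟨β, hβ, hβ_ne⟩ := exists_dotProduct_eq_zero_and_forall_ne_zero hi
  obtain ⟨t, ht⟩ := exists_forall_le_norm_smul_apply hβ_ne ρ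
  refine ⟨t • β, ht, i, ?_⟩
  rw [mulVec_smul, Pi.smul_apply, mulVec, hβ, smul_zero]

end NormedField

/-- Theorem 2 of the paper. If `C` is an `s × s` real symmetric positive
definite matrix which is not diagonal, then for every `ρ > 0` there exists `β ∈ M_ρ^s`
(i.e. `|β j| ≥ ρ` for every `j`) such that the vector `C β` has a zero component. -/
theorem stmt_1 {s : ℕ} (hs : 1 ≤ s) (C : Matrix (Fin s) (Fin s) ℝ)
    (hpd : C.PosDef) (hoff : ∃ i j, i ≠ j ∧ C i j ≠ 0)
    (ρ : ℝ) (hρ : 0 < ρ) :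
    ∃ β : Fin s → ℝ, (∀ j, ρ ≤ |β j|) ∧ ∃ i, C.mulVec β i = 0 := by
  obtain ⟨i, j, hij, hCij⟩ := hoff
  exact stmt_1_general C ⟨i, i, hpd.diag_pos.ne', j, hCij, hij⟩ ρ
end

section
/- Consider the noise-free linear model Y = Xβ, where X is an n×p real matrix with columns x₁,…,x_p, β ∈ ℝ^p has support S = {j : β_j ≠ 0} of size s with 1 ≤ s < p, and N = {1,…,p} \ S. Let α̂ = XᵀY. Then the following are equivalent: (i) marginal regression exactly reconstructs the support, i.e., there exists a threshold t > 0 such that for every j ∈ {1,…,p}, |α̂_j| ≥ t if and only if j ∈ S; (ii) Condition F (faithfulness) holds: max |C_NS β_S| < min |C_SS β_S|. -/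
open Matrix

/-- `t` is an exact threshold for `s` when thresholding the scores `f` at level `t` reconstructs
the support `s`; scores equal to `t` count as selected, as in marginal regression. -/
def IsExactThreshold {ι α : Type*} [LE α] (f : ι → α) (s : Set ι) (t : α) : Prop :=
  ∀ i, t ≤ f i ↔ i ∈ s

section LinearOrder

variable {ι α : Type*} [LinearOrder α] {f : ι → α} {s : Set ι} {t b : α}

theorem IsExactThreshold.lt_of_notMem (ht : IsExactThreshold f s t) {i : ι} (hi : i ∉ s) :
    f i < t :=
  not_le.1 (mt (ht i).1 hi)

theorem IsExactThreshold.apply_lt_apply (ht : IsExactThreshold f s t) {i j : ι} (hi : i ∉ s)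
    (hj : j ∈ s) : f i < f j :=
  (ht.lt_of_notMem hi).trans_le ((ht j).2 hj)

theorem isExactThreshold_of_isMinOn {m : ι} (hmin : IsMinOn f s m) (hm : m ∈ s)
    (hf : ∀ i ∉ s, ∀ j ∈ s, f i < f j) : IsExactThreshold f s (f m) := by
  refine fun i ↦ ⟨fun hle ↦ ?_, fun hi ↦ hmin hi⟩
  by_contra hi
  exact (hf i hi m hm).not_ge hle

theorem exists_isExactThreshold_iff (hfin : s.Finite) (hne : s.Nonempty) :
    (∃ t, IsExactThreshold f s t) ↔ ∀ i ∉ s, ∀ j ∈ s, f i < f j := by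
  refine ⟨fun ⟨_, ht⟩ _ hi _ hj ↦ ht.apply_lt_apply hi hj, fun hf ↦ ?_⟩
  obtain ⟨m, hm, hmin⟩ := s.exists_min_image f hfin hne
  exact ⟨f m, isExactThreshold_of_isMinOn (isMinOn_iff.2 hmin) hm hf⟩

-- A score off `s` that is at least `b` lies below every exact threshold, so `b < t` is automatic.
theorem stmt_2_general (hfin : s.Finite) (hne : s.Nonempty) (hb : ∃ i ∉ s, b ≤ f i) :
    (∃ t, b < t ∧ IsExactThreshold f s t) ↔ ∀ i ∉ s, ∀ j ∈ s, f i < f j := by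
  obtain ⟨k, hk, hbk⟩ := hb
  rw [← exists_isExactThreshold_iff hfin hne]
  exact exists_congr fun _ ↦ and_iff_right_of_imp fun ht ↦ hbk.trans_lt (ht.lt_of_notMem hk)

end LinearOrder

theorem exists_not_of_card_subtype_lt {α : Type*} [Fintype α] {P : α → Prop}
    [Fintype {a // P a}] (h : Fintype.card {a // P a} < Fintype.card α) : ∃ a, ¬P a := by
  by_contra! hP
  exact h.ne (Fintype.card_congr (Equiv.subtypeUnivEquiv hP))

/-- In the noise-free model `Y = Xβ` with support `S = {j | β j ≠ 0}`,
`1 ≤ s < p`, marginal regression (`α̂ = XᵀY`) exactly reconstructs the support for some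
threshold `t > 0` if and only if Condition F (faithfulness) holds:
`max |C_NS β_S| < min |C_SS β_S|`, phrased here pairwise: every coordinate of `α̂` off the
support is strictly smaller in absolute value than every coordinate of `α̂` on the support. -/
theorem stmt_2 {n p : ℕ} (X : Matrix (Fin n) (Fin p) ℝ) (β : Fin p → ℝ)
    (hs1 : 1 ≤ Fintype.card {j : Fin p // β j ≠ 0})
    (hsp : Fintype.card {j : Fin p // β j ≠ 0} < p) :
    (∃ t : ℝ, 0 < t ∧
      ∀ j, t ≤ |Xᵀ.mulVec (X.mulVec β) j| ↔ β j ≠ 0) ↔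
    (∀ i, β i = 0 → ∀ j, β j ≠ 0 →
      |Xᵀ.mulVec (X.mulVec β) i| < |Xᵀ.mulVec (X.mulVec β) j|) := by
  obtain ⟨j, hj⟩ := Fintype.card_pos_iff.1 hs1
  obtain ⟨k, hk⟩ := exists_not_of_card_subtype_lt (hsp.trans_eq (Fintype.card_fin p).symm)
  simpa only [IsExactThreshold, Set.mem_ofPred_eq, not_ne_iff] using
    stmt_2_general (f := fun j ↦ |Xᵀ.mulVec (X.mulVec β) j|) (s := {j | β j ≠ 0})
      (Set.toFinite _) ⟨j, hj⟩ ⟨k, hk, abs_nonneg _⟩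
end

section
/- Consider a sequence indexed by n of noise-free regression models: Y⁽ⁿ⁾ = X⁽ⁿ⁾β⁽ⁿ⁾ with X⁽ⁿ⁾ an n×p⁽ⁿ⁾ matrix with unit-norm columns; ε_n ∈ (0,1); a_n > 0; π_n a probability distribution on ℝ whose support is contained in (−∞, −a_n] ∪ [a_n, ∞); and β⁽ⁿ⁾ = (β₁,…,β_{p⁽ⁿ⁾}) iid with law (1−ε_n)ν₀ + ε_n π_n, with S = {j : β_j ≠ 0}. Suppose Condition F'' holds: A_n(a_n/2, ε_n, ḡ⁽ⁿ⁾) → 0 as n → ∞. Then P( max_{i ∉ S} |(C⁽ⁿ⁾β⁽ⁿ⁾)_i| ≤ min_{i ∈ S} |(C⁽ⁿ⁾β⁽ⁿ⁾)_i| ) → 1 as n → ∞; that is, the Faithfulness Condition max |C_NS β_S| ≤ min |C_SS β_S| holds except on an event whose probability tends to 0. -/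
open Matrix MeasureTheory ProbabilityTheory Filter Topology

/-- `g_{ij}(t) = E_{u∼π}[exp(t u ⟨x_i, x_j⟩)] − 1`, where `x_i, x_j` are columns of `X`. -/
noncomputable def gfun {n p : ℕ} (X : Matrix (Fin n) (Fin p) ℝ) (π : Measure ℝ)
    (i j : Fin p) (t : ℝ) : ℝ :=
  (∫ u, Real.exp (t * u * ∑ k, X k i * X k j) ∂π) - 1

/-- `ḡ_i(t) = Σ_{j ≠ i} g_{ij}(t)`. -/
noncomputable def gbar {n p : ℕ} (X : Matrix (Fin n) (Fin p) ℝ) (π : Measure ℝ)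
    (i : Fin p) (t : ℝ) : ℝ :=
  ∑ j ∈ Finset.univ.erase i, gfun X π i j t

/-- `A(δ, ε, ḡ) = inf_{t > 0} e^{−δt} Σ_i [exp(ε ḡ_i(t)) + exp(ε ḡ_i(−t))]`. -/
noncomputable def Afun {n p : ℕ} (X : Matrix (Fin n) (Fin p) ℝ) (π : Measure ℝ)
    (δ ε : ℝ) : ℝ :=
  sInf ((fun t => Real.exp (-(δ * t)) *
    ∑ i, (Real.exp (ε * gbar X π i t) + Real.exp (ε * gbar X π i (-t)))) '' Set.Ioi 0)

/-- The mixture law `(1−ε) ν₀ + ε π`, `ν₀` the point mass at `0`. -/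
noncomputable def mixLaw (ε : ℝ) (π : Measure ℝ) : Measure ℝ :=
  ENNReal.ofReal (1 - ε) • Measure.dirac 0 + ENNReal.ofReal ε • π

/-!
Split `(C b)_i = C_ii b_i + W_i` with `W_i = ∑_{j ≠ i} C_ij b_j`. Once every `|W_i|` is at most
`a / 2`, the entries of `C b` off the support are at most `a / 2` in absolute value, while those on
the support are at least `a - a / 2`, because `C_ii = ‖x_i‖² ≥ 1`. Each `W_i` is a sum of
independent terms, and `1 + x ≤ exp x` bounds the moment generating function of
`(1 - ε) ν₀ + ε π` by `exp (ε (E_π[exp (t u)] - 1))`, so that of `W_i` at `t` is at most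
`exp (ε ḡ_i(t))`. A two-sided Chernoff bound, a union bound over `i` and the infimum over `t > 0`
give failure probability at most `A(a / 2, ε, ḡ)`.
-/

section Faithfulness

variable {ι R : Type*} [Fintype ι] [Ring R]

/-- The Faithfulness Condition `max |C_NS b_S| ≤ min |C_SS b_S|`, where `S` is the support of `b`
and `N` its complement, phrased pairwise so that it makes sense when `S` or `N` is empty. -/
def IsFaithful [LinearOrder R] (C : Matrix ι ι R) (b : ι → R) : Prop :=
  ∀ i, b i = 0 → ∀ j, b j ≠ 0 → |C.mulVec b i| ≤ |C.mulVec b j|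

variable [DecidableEq ι]

/-- The off-diagonal part `W_i = ∑_{j ≠ i} C_ij b_j` of `(C b)_i`: the interference of the other
coordinates of `b` at the coordinate `i`. -/
def offDiagMulVec (C : Matrix ι ι R) (b : ι → R) (i : ι) : R :=
  ∑ j ∈ Finset.univ.erase i, C i j * b j

lemma mulVec_apply_eq_diag_add_offDiagMulVec (C : Matrix ι ι R) (b : ι → R) (i : ι) :
    C.mulVec b i = C i i * b i + offDiagMulVec C b i :=
  (Finset.add_sum_erase _ (fun j => C i j * b j) (Finset.mem_univ i)).symm

lemma isFaithful_of_abs_offDiagMulVec_le [LinearOrder R] [IsOrderedAddMonoid R]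
    {C : Matrix ι ι R} {b : ι → R} {δ : R} (hdiag : ∀ j, b j ≠ 0 → δ + δ ≤ |C j j * b j|)
    (hoff : ∀ i, |offDiagMulVec C b i| ≤ δ) : IsFaithful C b := by
  intro i hi j hj
  rw [mulVec_apply_eq_diag_add_offDiagMulVec C b i, mulVec_apply_eq_diag_add_offDiagMulVec C b j,
    hi, mul_zero, zero_add]
  calc |offDiagMulVec C b i| ≤ δ := hoff i
    _ ≤ |C j j * b j| - δ := le_sub_iff_add_le.2 (hdiag j hj)
    _ ≤ |C j j * b j| - |offDiagMulVec C b j| := sub_le_sub_left (hoff j) _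
    _ ≤ |C j j * b j + offDiagMulVec C b j| := abs_sub_abs_le_abs_add _ _

end Faithfulness

section MixLaw

variable {ε : ℝ} {π : Measure ℝ}

lemma isProbabilityMeasure_mixLaw [IsProbabilityMeasure π] (hε : ε ∈ Set.Icc 0 1) :
    IsProbabilityMeasure (mixLaw ε π) := by
  constructor
  simp only [mixLaw, Measure.add_apply, Measure.smul_apply, measure_univ, smul_eq_mul, mul_one]
  rw [← ENNReal.ofReal_add (sub_nonneg.2 hε.2) hε.1, sub_add_cancel, ENNReal.ofReal_one]

lemma ae_mixLaw_of_ae {P : ℝ → Prop} (h₀ : P 0) (h : ∀ᵐ u ∂π, P u) : ∀ᵐ u ∂mixLaw ε π, P u := by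
  rw [mixLaw, ae_add_measure_iff]
  exact ⟨Measure.ae_smul_measure (by rwa [ae_dirac_eq]) _, Measure.ae_smul_measure h _⟩

lemma integrable_mixLaw {f : ℝ → ℝ} (hf : Integrable f π) :
    Integrable f (mixLaw ε π) :=
  ((integrable_dirac enorm_lt_top).smul_measure ENNReal.ofReal_ne_top).add_measure
    (hf.smul_measure ENNReal.ofReal_ne_top)

lemma integral_mixLaw (hε : ε ∈ Set.Icc 0 1) {f : ℝ → ℝ} (hf : Integrable f π) :
    ∫ u, f u ∂mixLaw ε π = (1 - ε) * f 0 + ε * ∫ u, f u ∂π := by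
  rw [mixLaw, integral_add_measure
      ((integrable_dirac enorm_lt_top).smul_measure ENNReal.ofReal_ne_top)
      (hf.smul_measure ENNReal.ofReal_ne_top),
    integral_smul_measure, integral_smul_measure, integral_dirac,
    ENNReal.toReal_ofReal (sub_nonneg.2 hε.2), ENNReal.toReal_ofReal hε.1, smul_eq_mul, smul_eq_mul]

lemma mgf_id_mixLaw_le_exp (hε : ε ∈ Set.Icc 0 1) {t : ℝ}
    (h : Integrable (fun u => Real.exp (t * u)) π) :
    mgf id (mixLaw ε π) t ≤ Real.exp (ε * (mgf id π t - 1)) := by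
  calc mgf id (mixLaw ε π) t = ε * (mgf id π t - 1) + 1 := by
        simp only [mgf, id_eq, integral_mixLaw hε h, mul_zero, Real.exp_zero]
        ring
    _ ≤ Real.exp (ε * (mgf id π t - 1)) := Real.add_one_le_exp _

lemma ae_pi_mixLaw_ne_zero_imp_le_abs {ι : Type*} [Fintype ι] [IsProbabilityMeasure π]
    (hε : ε ∈ Set.Icc 0 1) {a : ℝ} (hsupp : ∀ᵐ u ∂π, a ≤ |u|) :
    ∀ᵐ b ∂Measure.pi fun _ : ι => mixLaw ε π, ∀ j, b j ≠ 0 → a ≤ |b j| := by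
  have := isProbabilityMeasure_mixLaw (π := π) hε
  have hmix : ∀ᵐ u ∂mixLaw ε π, u ≠ 0 → a ≤ |u| :=
    ae_mixLaw_of_ae (absurd rfl) (hsupp.mono fun _ hu _ => hu)
  exact ae_all_iff.2 fun j =>
    (Measure.quasiMeasurePreserving_eval (fun _ => mixLaw ε π) j).ae
      (p := fun u => u ≠ 0 → a ≤ |u|) hmix

end MixLaw

section Chernoff

lemma measureReal_le_abs_le_exp_mul_mgf_add {Ω : Type*} [MeasurableSpace Ω] {μ : Measure Ω}
    [IsFiniteMeasure μ] {Y : Ω → ℝ} (δ : ℝ) {t : ℝ} (ht : 0 ≤ t)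
    (hpos : Integrable (fun ω => Real.exp (t * Y ω)) μ)
    (hneg : Integrable (fun ω => Real.exp (-t * Y ω)) μ) :
    μ.real {ω | δ ≤ |Y ω|} ≤ Real.exp (-(δ * t)) * (mgf Y μ t + mgf Y μ (-t)) := by
  have hunion : {ω | δ ≤ |Y ω|} = {ω | δ ≤ Y ω} ∪ {ω | Y ω ≤ -δ} := by
    ext ω
    simp only [Set.mem_ofPred_eq, Set.mem_union, le_abs, le_neg]
  have hupper := measure_ge_le_exp_mul_mgf δ ht hpos
  have hlower := measure_le_le_exp_mul_mgf (-δ) (neg_nonpos.2 ht) hneg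
  calc μ.real {ω | δ ≤ |Y ω|} ≤ μ.real {ω | δ ≤ Y ω} + μ.real {ω | Y ω ≤ -δ} :=
        hunion ▸ measureReal_union_le _ _
    _ ≤ Real.exp (-t * δ) * mgf Y μ t + Real.exp (- -t * -δ) * mgf Y μ (-t) :=
        add_le_add hupper hlower
    _ = Real.exp (-(δ * t)) * (mgf Y μ t + mgf Y μ (-t)) := by ring_nf

variable {ι : Type*} [Fintype ι] {ν : ι → Measure ℝ} [∀ i, IsProbabilityMeasure (ν i)]

lemma iIndepFun_const_mul_pi (c : ι → ℝ) :
    iIndepFun (fun i (b : ι → ℝ) => c i * b i) (Measure.pi ν) :=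
  iIndepFun_pi (X := fun i u => c i * u) fun _ => by fun_prop

lemma mgf_sum_const_mul_pi (c : ι → ℝ) (s : Finset ι) (t : ℝ) :
    mgf (fun b => ∑ i ∈ s, c i * b i) (Measure.pi ν) t = ∏ i ∈ s, mgf id (ν i) (t * c i) := by
  have hsum : (fun b : ι → ℝ => ∑ i ∈ s, c i * b i) = ∑ i ∈ s, fun b => c i * b i := by
    ext b
    rw [Finset.sum_apply]
  rw [hsum, (iIndepFun_const_mul_pi c).mgf_sum (fun _ => by fun_prop)]
  refine Finset.prod_congr rfl fun i _ => ?_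
  rw [mgf_const_mul, mul_comm, ← (measurePreserving_eval ν i).map_eq,
    mgf_id_map (measurable_pi_apply i).aemeasurable]

lemma integrable_exp_mul_sum_const_mul_pi {c : ι → ℝ} {s : Finset ι} {t : ℝ}
    (h : ∀ i ∈ s, Integrable (fun u => Real.exp (t * c i * u)) (ν i)) :
    Integrable (fun b => Real.exp (t * ∑ i ∈ s, c i * b i)) (Measure.pi ν) := by
  have hterm (i : ι) (hi : i ∈ s) :
      Integrable (fun b : ι → ℝ => Real.exp (t * (c i * b i))) (Measure.pi ν) := by
    simpa only [Function.comp_def, Function.eval, mul_assoc]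
      using (measurePreserving_eval ν i).integrable_comp_of_integrable (h i hi)
  simpa only [Finset.sum_apply] using
    (iIndepFun_const_mul_pi c).integrable_exp_mul_sum (fun _ => by fun_prop) hterm

end Chernoff

section Design

variable {n p : ℕ} {X : Matrix (Fin n) (Fin p) ℝ} {π : Measure ℝ} {ε : ℝ}

lemma mul_mul_sum_col_eq_mul_gram_mul (t u : ℝ) (i j : Fin p) :
    t * u * ∑ k, X k i * X k j = t * (Xᵀ * X) i j * u := by
  simp only [mul_apply, transpose_apply]
  ring

lemma gfun_eq_mgf_sub_one (i j : Fin p) (t : ℝ) :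
    gfun X π i j t = mgf id π (t * (Xᵀ * X) i j) - 1 := by
  simp only [gfun, mgf, id_eq, mul_mul_sum_col_eq_mul_gram_mul]

lemma mgf_offDiagMulVec_gram_le [IsProbabilityMeasure π] (hε : ε ∈ Set.Icc 0 1) {i : Fin p} {t : ℝ}
    (hInt : ∀ j ≠ i, Integrable (fun u => Real.exp (t * (Xᵀ * X) i j * u)) π) :
    mgf (fun b => offDiagMulVec (Xᵀ * X) b i) (Measure.pi fun _ => mixLaw ε π) t ≤
      Real.exp (ε * gbar X π i t) := by
  have := isProbabilityMeasure_mixLaw (π := π) hε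
  calc mgf (fun b => offDiagMulVec (Xᵀ * X) b i) (Measure.pi fun _ => mixLaw ε π) t
      = ∏ j ∈ Finset.univ.erase i, mgf id (mixLaw ε π) (t * (Xᵀ * X) i j) :=
        mgf_sum_const_mul_pi _ _ t
    _ ≤ ∏ j ∈ Finset.univ.erase i, Real.exp (ε * gfun X π i j t) := by
        refine Finset.prod_le_prod (fun _ _ => mgf_nonneg) fun j hj => ?_
        rw [gfun_eq_mgf_sub_one]
        exact mgf_id_mixLaw_le_exp hε (hInt j (Finset.ne_of_mem_erase hj))
    _ = Real.exp (ε * gbar X π i t) := by rw [gbar, Finset.mul_sum, Real.exp_sum]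

lemma measureReal_le_abs_offDiagMulVec_gram_le [IsProbabilityMeasure π] (hε : ε ∈ Set.Icc 0 1)
    {i : Fin p} (hInt : ∀ t, ∀ j ≠ i, Integrable (fun u => Real.exp (t * (Xᵀ * X) i j * u)) π)
    (δ : ℝ) {t : ℝ} (ht : 0 ≤ t) :
    (Measure.pi fun _ => mixLaw ε π).real {b | δ ≤ |offDiagMulVec (Xᵀ * X) b i|} ≤
      Real.exp (-(δ * t)) *
        (Real.exp (ε * gbar X π i t) + Real.exp (ε * gbar X π i (-t))) := by
  have := isProbabilityMeasure_mixLaw (π := π) hε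
  have hexp (s : ℝ) : Integrable (fun b => Real.exp (s * offDiagMulVec (Xᵀ * X) b i))
      (Measure.pi fun _ => mixLaw ε π) :=
    integrable_exp_mul_sum_const_mul_pi fun j hj =>
      integrable_mixLaw (hInt s j (Finset.ne_of_mem_erase hj))
  refine (measureReal_le_abs_le_exp_mul_mgf_add δ ht (hexp t) (hexp (-t))).trans ?_
  gcongr
  · exact mgf_offDiagMulVec_gram_le hε (hInt t)
  · exact mgf_offDiagMulVec_gram_le hε (hInt (-t))

lemma measureReal_exists_le_abs_offDiagMulVec_gram_le_Afun [IsProbabilityMeasure π]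
    (hε : ε ∈ Set.Icc 0 1)
    (hInt : ∀ t i j, i ≠ j → Integrable (fun u => Real.exp (t * (Xᵀ * X) i j * u)) π) (δ : ℝ) :
    (Measure.pi fun _ => mixLaw ε π).real {b | ∃ i, δ ≤ |offDiagMulVec (Xᵀ * X) b i|} ≤
      Afun X π δ ε := by
  refine le_csInf (Set.nonempty_Ioi.image _) ?_
  rintro _ ⟨t, ht, rfl⟩
  simp only [Set.ofPred_exists, Finset.mul_sum]
  refine (measureReal_iUnion_fintype_le _).trans (Finset.sum_le_sum fun i _ => ?_)
  exact measureReal_le_abs_offDiagMulVec_gram_le hε (fun s j hj => hInt s i j hj.symm) δ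
    (Set.mem_Ioi.1 ht).le

lemma one_sub_Afun_le_measureReal_isFaithful_gram [IsProbabilityMeasure π] (hε : ε ∈ Set.Icc 0 1)
    (hcols : ∀ j, 1 ≤ ∑ i, X i j ^ 2) {a : ℝ} (hsupp : ∀ᵐ u ∂π, a ≤ |u|)
    (hInt : ∀ t i j, i ≠ j → Integrable (fun u => Real.exp (t * (Xᵀ * X) i j * u)) π) :
    1 - Afun X π (a / 2) ε ≤
      (Measure.pi fun _ => mixLaw ε π).real {b | IsFaithful (Xᵀ * X) b} := by
  have := isProbabilityMeasure_mixLaw (π := π) hε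
  set μ : Measure (Fin p → ℝ) := Measure.pi fun _ => mixLaw ε π
  have hdiag (j : Fin p) : 1 ≤ (Xᵀ * X) j j := by
    simpa only [mul_apply, transpose_apply, pow_two] using hcols j
  have hcover : ∀ᵐ b ∂μ,
      b ∈ {b | IsFaithful (Xᵀ * X) b} ∪ {b | ∃ i, a / 2 ≤ |offDiagMulVec (Xᵀ * X) b i|} := by
    filter_upwards [ae_pi_mixLaw_ne_zero_imp_le_abs hε hsupp] with b hb
    refine or_iff_not_imp_right.2 fun hsmall => ?_
    simp only [Set.mem_ofPred_eq, not_exists, not_le] at hsmall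
    refine isFaithful_of_abs_offDiagMulVec_le (fun j hj => ?_) fun i => (hsmall i).le
    rw [add_halves, abs_mul]
    exact (hb j hj).trans (le_mul_of_one_le_left (abs_nonneg _) ((hdiag j).trans (le_abs_self _)))
  rw [sub_le_iff_le_add]
  calc 1 = μ.real
        ({b | IsFaithful (Xᵀ * X) b} ∪ {b | ∃ i, a / 2 ≤ |offDiagMulVec (Xᵀ * X) b i|}) :=
        ((measureReal_congr (eventuallyEq_univ.2 hcover)).trans probReal_univ).symm
    _ ≤ μ.real {b | IsFaithful (Xᵀ * X) b} +
        μ.real {b | ∃ i, a / 2 ≤ |offDiagMulVec (Xᵀ * X) b i|} := measureReal_union_le _ _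
    _ ≤ μ.real {b | IsFaithful (Xᵀ * X) b} + Afun X π (a / 2) ε := by
        gcongr
        exact measureReal_exists_le_abs_offDiagMulVec_gram_le_Afun hε hInt (a / 2)

end Design

theorem stmt_6_general {κ : Type*} {l : Filter κ} (m p : κ → ℕ)
    (X : ∀ n, Matrix (Fin (m n)) (Fin (p n)) ℝ) (hcols : ∀ n j, 1 ≤ ∑ i, (X n i j) ^ 2)
    (a ε : κ → ℝ) (hε : ∀ n, ε n ∈ Set.Icc (0 : ℝ) 1)
    (π : κ → Measure ℝ) (hπ : ∀ n, IsProbabilityMeasure (π n))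
    (hsupp : ∀ n, ∀ᵐ u ∂(π n), a n ≤ |u|)
    (hInt : ∀ n (t : ℝ) (i j : Fin (p n)), i ≠ j →
      Integrable (fun u => Real.exp (t * u * ∑ k, X n k i * X n k j)) (π n))
    (hA : Tendsto (fun n => Afun (X n) (π n) (a n / 2) (ε n)) l (𝓝 0)) :
    Tendsto (fun n => (Measure.pi fun _ : Fin (p n) => mixLaw (ε n) (π n))
      {b | IsFaithful ((X n)ᵀ * X n) b}) l (𝓝 1) := by
  have (n : κ) := isProbabilityMeasure_mixLaw (π := π n) (hε n)
  simp only [mul_mul_sum_col_eq_mul_gram_mul] at hInt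
  rw [← ENNReal.tendsto_toReal_iff (fun _ => measure_ne_top _ _) ENNReal.one_ne_top,
    ENNReal.toReal_one]
  have hlower : Tendsto (fun n => 1 - Afun (X n) (π n) (a n / 2) (ε n)) l (𝓝 1) := by
    simpa only [sub_zero] using hA.const_sub 1
  exact tendsto_of_tendsto_of_tendsto_of_le_of_le hlower tendsto_const_nhds
    (fun n => one_sub_Afun_le_measureReal_isFaithful_gram (hε n) (hcols n) (hsupp n) (hInt n))
    (fun _ => measureReal_le_one)

/-- Theorem 4 of the paper. For a sequence of noise-free models with
unit-norm design columns, coefficients iid `(1−ε_n)ν₀ + ε_n π_n` where `π_n` is supported in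
`(−∞, −a_n] ∪ [a_n, ∞)`, if Condition F'' holds (`A_n(a_n/2, ε_n, ḡ⁽ⁿ⁾) → 0`), then with
probability tending to one the Faithfulness Condition `max |C_NS β_S| ≤ min |C_SS β_S|`
holds (phrased pairwise via the Gram matrix `C = XᵀX`). -/
theorem stmt_6 (p : ℕ → ℕ) (X : ∀ n, Matrix (Fin n) (Fin (p n)) ℝ)
    (hcols : ∀ n j, ∑ i, (X n i j) ^ 2 = 1)
    (a : ℕ → ℝ) (ha : ∀ n, 0 < a n)
    (ε : ℕ → ℝ) (hε : ∀ n, ε n ∈ Set.Ioo (0 : ℝ) 1)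
    (π : ℕ → Measure ℝ) (hπ : ∀ n, IsProbabilityMeasure (π n))
    (hsupp : ∀ n, ∀ᵐ u ∂(π n), a n ≤ |u|)
    (hInt : ∀ n (t : ℝ) (i j : Fin (p n)), i ≠ j →
      Integrable (fun u => Real.exp (t * u * ∑ k, X n k i * X n k j)) (π n))
    (hA : Tendsto (fun n => Afun (X n) (π n) (a n / 2) (ε n)) atTop (𝓝 0)) :
    Tendsto
      (fun n => (Measure.pi fun _ : Fin (p n) => mixLaw (ε n) (π n))
        {b | ∀ i, b i = 0 → ∀ j, b j ≠ 0 →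
          |((X n)ᵀ * X n).mulVec b i| ≤ |((X n)ᵀ * X n).mulVec b j|})
      atTop (𝓝 1) :=
  stmt_6_general id p X (fun n j => (hcols n j).ge) a ε (fun n => Set.Ioo_subset_Icc_self (hε n))
    π hπ hsupp hInt hA
end

section
/- Fix ϑ ∈ (0,1), θ > 0, and r > 0 with θ > 2(1−ϑ). Consider the sequence of random-design regression models: the entries of the n×p design matrix X are iid N(0, 1/n); independently, the coordinates of β ∈ ℝ^p are iid with law (1−ε_n)ν₀ + ε_n ν_{τ_n}; independently, z ~ N(0, I_n); and Y = Xβ + z; where p = p_n → ∞, n = p^θ (that is, log n / log p → θ), ε_n = p^{−ϑ}, and τ_n = √(2 r log p). Then for any sequence of measurable variable selection procedures β̂⁽ⁿ⁾ : ℝⁿ × ℝ^{n×p} → ℝ^p, the expected Hamming distance d*_n = E[ Σ_{j=1}^p 1{ sgn(β̂⁽ⁿ⁾_j(Y,X)) ≠ sgn(β_j) } ] satisfies: if r ≥ ϑ, then for every δ > 0, d*_n ≥ p^{1 − (ϑ+r)²/(4r) − δ} for all sufficiently large n; and if 0 < r < ϑ, then liminf_n d*_n / p^{1−ϑ} ≥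 1. -/
open MeasureTheory ProbabilityTheory Filter Topology

open scoped ENNReal NNReal

/-- Law of the `n × p` design matrix with iid `N(0, 1/n)` entries. -/
noncomputable def designLaw (n p : ℕ) : Measure (Fin n → Fin p → ℝ) :=
  Measure.pi fun _ => Measure.pi fun _ => gaussianReal 0 (n : ℝ≥0)⁻¹

/-- Law of the coefficient vector: iid coordinates with law `(1−ε) ν₀ + ε ν_τ`. -/
noncomputable def signalLaw (p : ℕ) (ε τ : ℝ) : Measure (Fin p → ℝ) :=
  Measure.pi fun _ =>
    (ENNReal.ofReal (1 - ε) • Measure.dirac (0 : ℝ) + ENNReal.ofReal ε • Measure.dirac τ)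

/-- Law of the noise vector: `N(0, I_n)`. -/
noncomputable def noiseLaw (n : ℕ) : Measure (Fin n → ℝ) :=
  Measure.pi fun _ => gaussianReal 0 1

/-- Joint law of `(X, β, z)` (mutually independent). -/
noncomputable def jointLaw (n p : ℕ) (ε τ : ℝ) :
    Measure ((Fin n → Fin p → ℝ) × (Fin p → ℝ) × (Fin n → ℝ)) :=
  (designLaw n p).prod ((signalLaw p ε τ).prod (noiseLaw n))

/-- The response `Y = Xβ + z` as a function of `ω = (X, β, z)`. -/
noncomputable def resp {n p : ℕ} (ω : (Fin n → Fin p → ℝ) × (Fin p → ℝ) × (Fin n → ℝ)) :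
    Fin n → ℝ :=
  fun i => (∑ j, ω.1 i j * ω.2.1 j) + ω.2.2 i

/-- The expected Hamming distance `d*_n = E[Σ_j 1{sgn(β̂_j(Y,X)) ≠ sgn(β_j)}]` of a variable
selection procedure `est`, computed as the sum of the per-coordinate error probabilities. -/
noncomputable def expHamming (n pn : ℕ) (ε τ : ℝ)
    (est : (Fin n → ℝ) → (Fin n → Fin pn → ℝ) → Fin pn → ℝ) : ℝ≥0∞ :=
  ∑ j, jointLaw n pn ε τ
    {ω | Real.sign (est (resp ω) ω.1 j) ≠ Real.sign (ω.2.1 j)}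

/-!
Given the design `X` and the coordinates of `β` other than the `j`-th, guessing the sign of `β j`
amounts to testing `N(0, I)` against `N(τ x, I)` from one observation, with prior weights `1 - ε`
and `ε`, where `x` is the `j`-th column of `X`. Any test makes an error at least
`∫ min ((1 - ε) dP₀) (ε dP₁)`, hence at least `ε (1 - ε)` times the probability under the
alternative that the likelihood ratio stays below `1 / ε`. The log-likelihood ratio is
`N(σ² / 2, σ²)` with `σ = τ ‖x‖`, so this probability equals `Φ(-log ε / σ - σ / 2)`, which
decreases in `σ`. By Chebyshev's inequality `‖x‖² < 1 + η` with high probability, so `σ² = τ² ‖x‖²`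
may be replaced by `σ² = 2 ρ log p` for any fixed `ρ > r`; then
`Φ(-log ε / σ - σ / 2) = Φ(√(log p) (ϑ - ρ) / √(2ρ))`. For `r < ρ < ϑ` it tends to `1`, and in
general it is at least `p ^ (-(ϑ - ρ)² / (4ρ) - o(1))` by the Gaussian tail bound. Summing over the
`p` coordinates and letting `ρ → r` yields both bounds, since
`1 - ϑ - (ϑ - r)² / (4r) = 1 - (ϑ + r)² / (4r)`.
-/

section ProductMeasures

variable {ι : Type*} [Fintype ι] {Ω : ι → Type*} [∀ i, MeasurableSpace (Ω i)]
  (μ : ∀ i, Measure (Ω i)) [∀ i, IsProbabilityMeasure (μ i)]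

theorem lintegral_pi_prod {f : ∀ i, Ω i → ℝ≥0∞} (hf : ∀ i, Measurable (f i)) :
    ∫⁻ x, ∏ i, f i (x i) ∂Measure.pi μ = ∏ i, ∫⁻ x, f i x ∂μ i := by
  rw [lintegral_prod_eq_prod_lintegral_of_indepFun Finset.univ _
    (iIndepFun_pi fun i ↦ (hf i).aemeasurable) fun i ↦ (hf i).comp (measurable_pi_apply i)]
  exact Finset.prod_congr rfl fun i _ ↦ (measurePreserving_eval μ i).lintegral_comp (hf i)

theorem pi_withDensity {f : ∀ i, Ω i → ℝ≥0∞} (hf : ∀ i, Measurable (f i))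
    [∀ i, SigmaFinite ((μ i).withDensity (f i))] :
    Measure.pi (fun i ↦ (μ i).withDensity (f i)) =
      (Measure.pi μ).withDensity fun x ↦ ∏ i, f i (x i) := by
  refine Measure.pi_eq fun s hs ↦ ?_
  have hind (x : ∀ i, Ω i) : (Set.univ.pi s).indicator (fun x ↦ ∏ i, f i (x i)) x =
      ∏ i, (s i).indicator (f i) (x i) := by
    classical
    simp only [Set.indicator_apply, Finset.prod_ite_zero, Set.mem_univ_pi, Finset.mem_univ,
      true_imp_iff]
  rw [withDensity_apply _ (.univ_pi hs), ← lintegral_indicator (.univ_pi hs),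
    lintegral_congr hind, lintegral_pi_prod μ fun i ↦ (hf i).indicator (hs i)]
  exact Finset.prod_congr rfl fun i _ ↦ by
    rw [lintegral_indicator (hs i), withDensity_apply _ (hs i)]

theorem lintegral_pi_eq_lintegral_update [DecidableEq ι] {F : (∀ i, Ω i) → ℝ≥0∞}
    (hF : Measurable F) (j : ι) :
    ∫⁻ x, F x ∂Measure.pi μ =
      ∫⁻ x, ∫⁻ b, F (Function.update x j b) ∂μ j ∂Measure.pi μ := by
  have hFj : Measurable fun x ↦ ∫⁻ b, F (Function.update x j b) ∂μ j :=
    (hF.comp measurable_update').lintegral_prod_right'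
  refine lintegral_eq_of_lmarginal_eq {j} hF hFj ?_
  ext x
  simp only [lmarginal_singleton, Function.update_idem, lintegral_const, measure_univ, mul_one]

theorem measure_pi_sum_integral_add_le_sum {X : ∀ i, Ω i → ℝ} (hX : ∀ i, MemLp (X i) 2 (μ i))
    {t : ℝ} (ht : 0 < t) :
    Measure.pi μ {x | ∑ i, ∫ y, X i y ∂μ i + t ≤ ∑ i, X i (x i)} ≤
      ENNReal.ofReal ((∑ i, Var[X i; μ i]) / t ^ 2) := by
  have hXi (i : ι) : MemLp (fun x : ∀ i, Ω i ↦ X i (x i)) 2 (Measure.pi μ) :=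
    (hX i).comp_measurePreserving (measurePreserving_eval μ i)
  have hmean : ∫ x, (∑ i, fun x : ∀ i, Ω i ↦ X i (x i)) x ∂Measure.pi μ =
      ∑ i, ∫ y, X i y ∂μ i := by
    simp only [Finset.sum_apply]
    rw [integral_finsetSum _ fun i _ ↦ (hXi i).integrable one_le_two]
    exact Finset.sum_congr rfl fun i _ ↦ integral_comp_eval (hX i).aestronglyMeasurable
  rw [← variance_sum_pi hX]
  refine (measure_mono fun x hx ↦ ?_).trans
    (meas_ge_le_variance_div_sq (memLp_finsetSum' _ fun i _ ↦ hXi i) ht)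
  rw [Set.mem_ofPred_eq, hmean, Finset.sum_apply]
  exact (le_sub_iff_add_le'.2 hx).trans (le_abs_self _)

end ProductMeasures

section LikelihoodRatio

variable {α : Type*} [MeasurableSpace α] {μ : Measure α} {L : α → ℝ≥0∞} {a b : ℝ≥0∞}

theorem mul_withDensity_le_measure {s : Set α} (hs : MeasurableSet s)
    (hL : ∀ x ∈ s, b * L x ≤ 1) (hLm : Measurable L) : b * μ.withDensity L s ≤ μ s := by
  rw [withDensity_apply _ hs, ← lintegral_const_mul _ hLm, ← setLIntegral_one]
  exact setLIntegral_mono measurable_const hL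

-- The Bayes risk is at least `∫ min (a dμ) (b L dμ)`; where `b L ≤ 1`, the integrand dominates
-- `a b L`, because `a ≤ 1`.
theorem mul_mul_withDensity_le_bayes_risk (hLm : Measurable L) (ha : a ≤ 1) {A B : Set α}
    (hA : MeasurableSet A) (hAB : A ∪ B = Set.univ) :
    a * b * μ.withDensity L {x | b * L x ≤ 1} ≤ a * μ A + b * μ.withDensity L B := by
  set ν := μ.withDensity L
  set G := {x | b * L x ≤ 1}
  have hG : MeasurableSet G := measurableSet_le (hLm.const_mul b) measurable_const
  have hsub : G ⊆ G ∩ A ∪ B := fun x hx ↦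
    (hAB.ge (Set.mem_univ x)).imp (fun hxA ↦ ⟨hx, hxA⟩) id
  have hGA : b * ν (G ∩ A) ≤ μ A :=
    (mul_withDensity_le_measure (hG.inter hA) (fun x hx ↦ hx.1) hLm).trans
      (measure_mono Set.inter_subset_right)
  calc a * b * ν G
      ≤ a * b * (ν (G ∩ A) + ν B) := by
        gcongr; exact (measure_mono hsub).trans (measure_union_le _ _)
    _ = a * (b * ν (G ∩ A)) + a * (b * ν B) := by ring
    _ ≤ a * μ A + 1 * (b * ν B) := by gcongr
    _ = a * μ A + b * ν B := by rw [one_mul]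

end LikelihoodRatio

section GaussianShift

theorem gaussianReal_one_eq_withDensity (a : ℝ) :
    gaussianReal a 1 =
      (gaussianReal 0 1).withDensity fun x ↦ ENNReal.ofReal (Real.exp (a * x - a ^ 2 / 2)) := by
  rw [gaussianReal_of_var_ne_zero a one_ne_zero, gaussianReal_of_var_ne_zero 0 one_ne_zero,
    ← withDensity_mul _ (measurable_gaussianPDF 0 1) (by fun_prop)]
  congr 1
  ext x
  rw [Pi.mul_apply, gaussianPDF, gaussianPDF, ← ENNReal.ofReal_mul (gaussianPDFReal_nonneg _ _ _),
    gaussianPDFReal, gaussianPDFReal, mul_assoc _ (Real.exp _), ← Real.exp_add]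
  congr 3
  norm_num
  ring

variable {ι : Type*} [Fintype ι] (v : ι → ℝ)

theorem pi_gaussianReal_map_add :
    (Measure.pi fun _ : ι ↦ gaussianReal 0 1).map (· + v) =
      (Measure.pi fun _ : ι ↦ gaussianReal 0 1).withDensity fun y ↦
        ENNReal.ofReal (Real.exp (∑ i, v i * y i - (∑ i, v i ^ 2) / 2)) := by
  have hmap : (Measure.pi fun _ : ι ↦ gaussianReal 0 1).map (· + v) =
      Measure.pi fun i ↦ gaussianReal (v i) 1 := by
    refine (Measure.pi_map_pi (f := fun i y ↦ y + v i) fun i ↦ by fun_prop).trans ?_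
    simp only [gaussianReal_map_add_const, zero_add]
  have (i : ι) : SigmaFinite ((gaussianReal 0 1).withDensity fun x ↦
      ENNReal.ofReal (Real.exp (v i * x - v i ^ 2 / 2))) := by
    rw [← gaussianReal_one_eq_withDensity]; infer_instance
  rw [hmap, funext fun i ↦ gaussianReal_one_eq_withDensity (v i),
    pi_withDensity _ fun i ↦ by fun_prop]
  congr 1
  ext y
  rw [← ENNReal.ofReal_prod_of_nonneg fun i _ ↦ (Real.exp_pos _).le, ← Real.exp_sum,
    Finset.sum_sub_distrib, Finset.sum_div]

theorem pi_gaussianReal_map_sum_mul :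
    (Measure.pi fun _ : ι ↦ gaussianReal 0 1).map (fun z ↦ ∑ i, v i * z i) =
      (gaussianReal 0 1).map (√(∑ i, v i ^ 2) * ·) := by
  let ℓ : StrongDual ℝ (EuclideanSpace ℝ ι) := innerSL ℝ (WithLp.toLp 2 v)
  have hℓ : (fun z : ι → ℝ ↦ ∑ i, v i * z i) = ℓ ∘ WithLp.toLp 2 := by
    ext z
    simp [ℓ, PiLp.inner_apply, mul_comm]
  have hnorm : ‖ℓ‖ ^ 2 = ∑ i, v i ^ 2 := by
    simp [ℓ, EuclideanSpace.norm_sq_eq]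
  rw [hℓ, ← Measure.map_map (by fun_prop) (by fun_prop), map_pi_eq_stdGaussian,
    IsGaussian.map_eq_gaussianReal, integral_strongDual_stdGaussian, variance_dual_stdGaussian,
    hnorm, gaussianReal_map_const_mul, mul_zero]
  congr 1
  ext
  simp [Real.sq_sqrt, Finset.sum_nonneg, sq_nonneg]

end GaussianShift

section GaussianSquare

theorem memLp_sq_gaussianReal (v : ℝ≥0) : MemLp (fun x : ℝ ↦ x ^ 2) 2 (gaussianReal 0 v) := by
  rw [memLp_two_iff_integrable_sq (by fun_prop)]
  refine ((memLp_id_gaussianReal (μ := 0) (v := v) 4).integrable_norm_pow (by norm_num)).congr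
    (.of_forall fun x ↦ ?_)
  simp only [id_eq, Real.norm_eq_abs, ← pow_mul]
  exact Even.pow_abs (by decide) x

theorem variance_sq_gaussianReal (v : ℝ≥0) :
    Var[fun x ↦ x ^ 2; gaussianReal 0 v] = v ^ 2 * Var[fun x ↦ x ^ 2; gaussianReal 0 1] := by
  have hmap : gaussianReal 0 v = (gaussianReal 0 1).map (√(v : ℝ) * ·) := by
    rw [gaussianReal_map_const_mul, mul_zero]
    congr 1
    ext
    simp
  rw [hmap, variance_map (by fun_prop) (by fun_prop)]
  simp only [Function.comp_def, mul_pow, Real.sq_sqrt v.coe_nonneg, variance_const_mul]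

theorem integral_sq_gaussianReal (v : ℝ≥0) : ∫ x, x ^ 2 ∂gaussianReal 0 v = v := by
  have h := variance_fun_id_gaussianReal (μ := 0) (v := v)
  simpa only [variance_eq_integral aemeasurable_id', integral_id_gaussianReal, sub_zero] using h

end GaussianSquare

section GaussianTail

theorem exp_le_cdf_gaussianReal (x : ℝ) :
    (√(2 * Real.pi))⁻¹ * Real.exp (-(|x| + 1) ^ 2 / 2) ≤ cdf (gaussianReal 0 1) x := by
  set m := (√(2 * Real.pi))⁻¹ * Real.exp (-(|x| + 1) ^ 2 / 2)
  have hpdf : ∀ y ∈ Set.Icc (x - 1) x, ENNReal.ofReal m ≤ gaussianPDF 0 1 y := by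
    intro y hy
    have hyx : |y| ≤ |x| + 1 := abs_le.2
      ⟨by linarith [neg_abs_le x, hy.1], by linarith [le_abs_self x, hy.2]⟩
    have hsq : y ^ 2 ≤ (|x| + 1) ^ 2 := sq_le_sq.2 (hyx.trans (le_abs_self _))
    simp only [gaussianPDF, gaussianPDFReal, sub_zero, NNReal.coe_one, mul_one, m]
    gcongr
  rw [cdf_eq_real, measureReal_def, ← ENNReal.ofReal_le_iff_le_toReal (measure_ne_top _ _)]
  calc ENNReal.ofReal m = ∫⁻ _ in Set.Icc (x - 1) x, ENNReal.ofReal m := by simp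
    _ ≤ ∫⁻ y in Set.Icc (x - 1) x, gaussianPDF 0 1 y := setLIntegral_mono (by fun_prop) hpdf
    _ = gaussianReal 0 1 (Set.Icc (x - 1) x) := (gaussianReal_apply 0 one_ne_zero _).symm
    _ ≤ gaussianReal 0 1 (Set.Iic x) := measure_mono Set.Icc_subset_Iic_self

theorem eventually_exp_neg_mul_sq_le_mul_cdf_gaussianReal {a γ c : ℝ} (hγ : a ^ 2 / 2 < γ)
    (hc : 0 < c) :
    ∀ᶠ s in atTop, Real.exp (-(γ * s ^ 2)) ≤ c * cdf (gaussianReal 0 1) (a * s) := by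
  have hquad : Tendsto (fun s ↦ s * ((γ - a ^ 2 / 2) * s - |a|)) atTop atTop :=
    tendsto_id.atTop_mul_atTop₀ <| tendsto_atTop_add_const_right _ _ <|
      tendsto_id.const_mul_atTop (sub_pos.2 hγ)
  have hK : 0 < c * (√(2 * Real.pi))⁻¹ := by positivity
  filter_upwards [hquad.eventually_ge_atTop (1 / 2 - Real.log (c * (√(2 * Real.pi))⁻¹)),
    eventually_ge_atTop 0] with s hs hs0
  calc Real.exp (-(γ * s ^ 2))
      ≤ Real.exp (Real.log (c * (√(2 * Real.pi))⁻¹) + -(|a * s| + 1) ^ 2 / 2) := by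
        rw [Real.exp_le_exp, abs_mul, abs_of_nonneg hs0]
        have : (|a| * s + 1) ^ 2 = a ^ 2 * s ^ 2 + 2 * |a| * s + 1 := by
          rw [← sq_abs a]; ring
        linarith
    _ = c * ((√(2 * Real.pi))⁻¹ * Real.exp (-(|a * s| + 1) ^ 2 / 2)) := by
        rw [Real.exp_add, Real.exp_log hK, mul_assoc]
    _ ≤ c * cdf (gaussianReal 0 1) (a * s) := by
        gcongr; exact exp_le_cdf_gaussianReal _

end GaussianTail

section MissProb

/-- The probability that the likelihood ratio between `N(v, I)` and `N(0, I)`, `‖v‖ = σ`, stays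
below `1 / ε` under the alternative `N(v, I)`: there its logarithm has law `N(σ² / 2, σ²)`. -/
noncomputable def missProb (ε σ : ℝ) : ℝ :=
  cdf (gaussianReal 0 1) (-Real.log ε / σ - σ / 2)

theorem missProb_nonneg (ε σ : ℝ) : 0 ≤ missProb ε σ := cdf_nonneg _ _

variable {ι : Type*} [Fintype ι] {ε σ : ℝ} {v : ι → ℝ}

theorem missProb_le_measure_likelihoodRatio_le (hε : 0 < ε) (hε1 : ε ≤ 1) (hσ : 0 < σ)
    (hv : ∑ i, v i ^ 2 ≤ σ ^ 2) :
    ENNReal.ofReal (missProb ε σ) ≤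
      ((Measure.pi fun _ : ι ↦ gaussianReal 0 1).map (· + v))
        {y | ENNReal.ofReal ε *
          ENNReal.ofReal (Real.exp (∑ i, v i * y i - (∑ i, v i ^ 2) / 2)) ≤ 1} := by
  set q := ∑ i, v i ^ 2
  have hq : 0 ≤ q := Finset.sum_nonneg fun i _ ↦ sq_nonneg (v i)
  have hqσ : √q ≤ σ := Real.sqrt_le_iff.2 ⟨hσ.le, hv⟩
  have hset : (· + v) ⁻¹' {y : ι → ℝ | ENNReal.ofReal ε *
        ENNReal.ofReal (Real.exp (∑ i, v i * y i - q / 2)) ≤ 1} =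
      (fun z ↦ ∑ i, v i * z i) ⁻¹' Set.Iic (-Real.log ε - q / 2) := by
    ext z
    have hsum : ∑ i, v i * (z i + v i) = ∑ i, v i * z i + q := by
      simp only [q, mul_add, Finset.sum_add_distrib, sq]
    simp only [Set.mem_preimage, Set.mem_ofPred_eq, Set.mem_Iic, Pi.add_apply, hsum]
    rw [← ENNReal.ofReal_mul hε.le, ENNReal.ofReal_le_one, ← Real.exp_log hε, ← Real.exp_add,
      Real.exp_le_one_iff, Real.log_exp]
    constructor <;> intro h <;> linarith
  rw [Measure.map_apply (by fun_prop) (measurableSet_le (by fun_prop) (by fun_prop)), hset,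
    ← Measure.map_apply (by fun_prop) measurableSet_Iic, pi_gaussianReal_map_sum_mul,
    Measure.map_apply (by fun_prop) measurableSet_Iic, missProb, ofReal_cdf]
  refine measure_mono fun y (hy : y ≤ -Real.log ε / σ - σ / 2) ↦ ?_
  have hlog : √q / σ * -Real.log ε ≤ 1 * -Real.log ε :=
    mul_le_mul_of_nonneg_right ((div_le_one hσ).2 hqσ) (neg_nonneg.2 (Real.log_nonpos hε.le hε1))
  calc √q * y ≤ √q * (-Real.log ε / σ - σ / 2) := by gcongr
    _ = √q / σ * -Real.log ε - √q * σ / 2 := by ring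
    _ ≤ 1 * -Real.log ε - √q * √q / 2 := by gcongr
    _ = -Real.log ε - q / 2 := by rw [one_mul, Real.mul_self_sqrt hq]

theorem mul_missProb_le_bayes_risk_gaussian_shift (hε : 0 < ε) (hε1 : ε ≤ 1) (hσ : 0 < σ)
    (hv : ∑ i, v i ^ 2 ≤ σ ^ 2) {A B : Set (ι → ℝ)} (hA : MeasurableSet A)
    (hAB : A ∪ B = Set.univ) :
    ENNReal.ofReal (ε * (1 - ε) * missProb ε σ) ≤
      ENNReal.ofReal (1 - ε) * (Measure.pi fun _ : ι ↦ gaussianReal 0 1) A +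
        ENNReal.ofReal ε * ((Measure.pi fun _ : ι ↦ gaussianReal 0 1).map (· + v)) B := by
  have hε' : 0 ≤ 1 - ε := sub_nonneg.2 hε1
  have hbayes := mul_mul_withDensity_le_bayes_risk
    (μ := Measure.pi fun _ : ι ↦ gaussianReal 0 1) (a := ENNReal.ofReal (1 - ε))
    (b := ENNReal.ofReal ε)
    (L := fun y ↦ ENNReal.ofReal (Real.exp (∑ i, v i * y i - (∑ i, v i ^ 2) / 2)))
    (by fun_prop) (ENNReal.ofReal_le_one.2 (by linarith)) hA hAB
  rw [← pi_gaussianReal_map_add] at hbayes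
  refine le_trans ?_ hbayes
  rw [ENNReal.ofReal_mul (by positivity), mul_comm ε, ENNReal.ofReal_mul hε']
  gcongr
  exact missProb_le_measure_likelihoodRatio_le hε hε1 hσ hv

end MissProb

section VariableSelection

variable {n p : ℕ} {ε τ : ℝ}

instance : IsProbabilityMeasure (designLaw n p) := by
  unfold designLaw; infer_instance

instance : IsProbabilityMeasure (noiseLaw n) := by
  unfold noiseLaw; infer_instance

/-- The law `(1 - ε) ν₀ + ε ν_τ` of a single coordinate of the signal. -/
noncomputable def coordLaw (ε τ : ℝ) : Measure ℝ :=
  ENNReal.ofReal (1 - ε) • Measure.dirac 0 + ENNReal.ofReal ε • Measure.dirac τ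

theorem signalLaw_eq_pi (p : ℕ) (ε τ : ℝ) : signalLaw p ε τ = Measure.pi fun _ ↦ coordLaw ε τ :=
  rfl

theorem isProbabilityMeasure_coordLaw (hε : 0 ≤ ε) (hε1 : ε ≤ 1) :
    IsProbabilityMeasure (coordLaw ε τ) :=
  ⟨by simp [coordLaw, ← ENNReal.ofReal_add (sub_nonneg.2 hε1) hε]⟩

theorem lintegral_coordLaw (f : ℝ → ℝ≥0∞) :
    ∫⁻ b, f b ∂coordLaw ε τ = ENNReal.ofReal (1 - ε) * f 0 + ENNReal.ofReal ε * f τ := by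
  simp [coordLaw]

theorem measurable_realSign : Measurable Real.sign :=
  Measurable.ite measurableSet_Iio measurable_const
    (Measurable.ite measurableSet_Ioi measurable_const measurable_const)

theorem measurable_resp :
    Measurable (resp : (Fin n → Fin p → ℝ) × (Fin p → ℝ) × (Fin n → ℝ) → Fin n → ℝ) := by
  unfold resp; fun_prop

theorem resp_update (X : Fin n → Fin p → ℝ) (β : Fin p → ℝ) (z : Fin n → ℝ) (j : Fin p) (b : ℝ) :
    resp (X, Function.update β j b, z) =
      resp (X, Function.update β j 0, z + fun i ↦ b * X i j) := by
  have hsum (i : Fin n) (c : ℝ) : ∑ k, X i k * Function.update β j c k =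
      X i j * c + ∑ k ∈ Finset.univ.erase j, X i k * β k := by
    rw [← Finset.add_sum_erase _ _ (Finset.mem_univ j), Function.update_self]
    congr 1
    exact Finset.sum_congr rfl fun k hk ↦ by
      rw [Function.update_of_ne (Finset.ne_of_mem_erase hk)]
  ext i
  simp only [resp, Pi.add_apply, hsum]
  ring

/-- The event that the procedure `est` gets the sign of the `j`-th coordinate of the signal
wrong. -/
def signError (est : (Fin n → ℝ) → (Fin n → Fin p → ℝ) → Fin p → ℝ) (j : Fin p) :
    Set ((Fin n → Fin p → ℝ) × (Fin p → ℝ) × (Fin n → ℝ)) :=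
  {ω | Real.sign (est (resp ω) ω.1 j) ≠ Real.sign (ω.2.1 j)}

variable {est : (Fin n → ℝ) → (Fin n → Fin p → ℝ) → Fin p → ℝ}

theorem measurableSet_signError
    (hest : Measurable fun yx : (Fin n → ℝ) × (Fin n → Fin p → ℝ) ↦ est yx.1 yx.2) (j : Fin p) :
    MeasurableSet (signError est j) := by
  have hβ : Measurable fun ω : (Fin n → Fin p → ℝ) × (Fin p → ℝ) × (Fin n → ℝ) ↦ ω.2.1 j := by
    fun_prop
  exact (measurableSet_eq_fun
    (measurable_realSign.comp <| (measurable_pi_apply j).comp <|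
      hest.comp (measurable_resp.prodMk measurable_fst))
    (measurable_realSign.comp hβ)).compl

theorem mul_missProb_le_lintegral_noiseLaw_signError
    (hest : Measurable fun yx : (Fin n → ℝ) × (Fin n → Fin p → ℝ) ↦ est yx.1 yx.2) (j : Fin p)
    (hε : 0 < ε) (hε1 : ε ≤ 1) (hτ : 0 < τ) {σ : ℝ} (hσ : 0 < σ) {X : Fin n → Fin p → ℝ}
    (hX : τ ^ 2 * ∑ i, X i j ^ 2 ≤ σ ^ 2) (β : Fin p → ℝ) :
    ENNReal.ofReal (ε * (1 - ε) * missProb ε σ) ≤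
      ∫⁻ b, noiseLaw n {z | (X, Function.update β j b, z) ∈ signError est j} ∂coordLaw ε τ := by
  set s : (Fin n → ℝ) → ℝ := fun z ↦
    Real.sign (est (resp (X, Function.update β j 0, z)) X j)
  have hsm : Measurable s := by
    have hresp : Measurable fun z : Fin n → ℝ ↦ (resp (X, Function.update β j 0, z), X) :=
      (measurable_resp.comp (by fun_prop)).prodMk measurable_const
    exact measurable_realSign.comp <| (measurable_pi_apply j).comp <| hest.comp hresp
  have h0 : {z | (X, Function.update β j 0, z) ∈ signError est j} = {z | s z ≠ 0} := by
    ext z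
    simp [signError, s]
  have hτX : {z | (X, Function.update β j τ, z) ∈ signError est j} =
      (· + fun i ↦ τ * X i j) ⁻¹' {z | s z ≠ 1} := by
    ext z
    simp only [signError, Set.mem_preimage, Set.mem_ofPred_eq, s, resp_update X β z j τ,
      Function.update_self, Real.sign_of_pos hτ]
  have hcover : {z | s z ≠ 0} ∪ {z | s z ≠ 1} = Set.univ := by
    refine Set.eq_univ_of_forall fun z ↦ ?_
    by_cases h : s z = 0 <;> simp [h]
  have hs1 : MeasurableSet {z | s z ≠ 1} := (hsm (measurableSet_singleton 1)).compl
  rw [lintegral_coordLaw, h0, hτX, ← Measure.map_apply (by fun_prop) hs1]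
  refine mul_missProb_le_bayes_risk_gaussian_shift hε hε1 hσ ?_
    (hsm (measurableSet_singleton 0)).compl hcover
  simpa only [mul_pow, ← Finset.mul_sum] using hX

theorem mul_missProb_le_measure_signError_section
    (hest : Measurable fun yx : (Fin n → ℝ) × (Fin n → Fin p → ℝ) ↦ est yx.1 yx.2) (j : Fin p)
    (hε : 0 < ε) (hε1 : ε ≤ 1) (hτ : 0 < τ) {σ : ℝ} (hσ : 0 < σ) {X : Fin n → Fin p → ℝ}
    (hX : τ ^ 2 * ∑ i, X i j ^ 2 ≤ σ ^ 2) :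
    ENNReal.ofReal (ε * (1 - ε) * missProb ε σ) ≤
      ((signalLaw p ε τ).prod (noiseLaw n)) (Prod.mk X ⁻¹' signError est j) := by
  have := isProbabilityMeasure_coordLaw (τ := τ) hε.le hε1
  have hE : MeasurableSet (Prod.mk X ⁻¹' signError est j) :=
    measurable_prodMk_left (measurableSet_signError hest j)
  rw [signalLaw_eq_pi, Measure.prod_apply hE,
    lintegral_pi_eq_lintegral_update _ (measurable_measure_prodMk_left hE) j]
  calc ENNReal.ofReal (ε * (1 - ε) * missProb ε σ)
      = ∫⁻ _, ENNReal.ofReal (ε * (1 - ε) * missProb ε σ)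
          ∂Measure.pi fun _ : Fin p ↦ coordLaw ε τ := by simp
    _ ≤ _ := lintegral_mono
      (mul_missProb_le_lintegral_noiseLaw_signError hest j hε hε1 hτ hσ hX)

theorem designLaw_map_column (n : ℕ) {p : ℕ} (j : Fin p) :
    (designLaw n p).map (fun X i ↦ X i j) =
      Measure.pi fun _ : Fin n ↦ gaussianReal 0 (n : ℝ≥0)⁻¹ := by
  refine (Measure.pi_map_pi (f := fun _ (y : Fin p → ℝ) ↦ y j)
    fun _ ↦ (measurable_pi_apply j).aemeasurable).trans ?_
  congr 1
  ext1
  exact (measurePreserving_eval (fun _ : Fin p ↦ gaussianReal 0 (n : ℝ≥0)⁻¹) j).map_eq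

theorem one_sub_variance_div_le_designLaw_column_sq_lt (hn : 0 < n) (j : Fin p) {η : ℝ}
    (hη : 0 < η) :
    ENNReal.ofReal (1 - Var[fun x ↦ x ^ 2; gaussianReal 0 1] / (n * η ^ 2)) ≤
      designLaw n p {X | ∑ i, X i j ^ 2 < 1 + η} := by
  have hn' : (n : ℝ) ≠ 0 := by positivity
  set S : Set (Fin n → ℝ) := {x | 1 + η ≤ ∑ i, x i ^ 2}
  have hS : MeasurableSet S := measurableSet_le (by fun_prop) (by fun_prop)
  have hS_le : (Measure.pi fun _ : Fin n ↦ gaussianReal 0 (n : ℝ≥0)⁻¹) S ≤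
      ENNReal.ofReal (Var[fun x ↦ x ^ 2; gaussianReal 0 1] / (n * η ^ 2)) := by
    have h := measure_pi_sum_integral_add_le_sum
      (fun _ : Fin n ↦ gaussianReal 0 (n : ℝ≥0)⁻¹) (fun _ ↦ memLp_sq_gaussianReal _) hη
    simp only [integral_sq_gaussianReal, variance_sq_gaussianReal (n : ℝ≥0)⁻¹, Finset.sum_const,
      Finset.card_univ, Fintype.card_fin, nsmul_eq_mul, NNReal.coe_inv, NNReal.coe_natCast,
      mul_inv_cancel₀ hn'] at h
    convert h using 2
    field_simp
  have hcompl : {X : Fin n → Fin p → ℝ | ∑ i, X i j ^ 2 < 1 + η} =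
      (fun X i ↦ X i j) ⁻¹' Sᶜ := by
    ext X
    simp [S]
  have hvar : 0 ≤ Var[fun x ↦ x ^ 2; gaussianReal 0 1] / (n * η ^ 2) :=
    div_nonneg (variance_nonneg _ _) (by positivity)
  rw [hcompl, ← Measure.map_apply (by fun_prop) hS.compl, designLaw_map_column,
    prob_compl_eq_one_sub hS, ENNReal.ofReal_sub _ hvar, ENNReal.ofReal_one]
  exact tsub_le_tsub_left hS_le 1

theorem mul_missProb_mul_designLaw_le_jointLaw_signError
    (hest : Measurable fun yx : (Fin n → ℝ) × (Fin n → Fin p → ℝ) ↦ est yx.1 yx.2) (j : Fin p)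
    (hε : 0 < ε) (hε1 : ε ≤ 1) (hτ : 0 < τ) {σ : ℝ} (hσ : 0 < σ) :
    ENNReal.ofReal (ε * (1 - ε) * missProb ε σ) *
        designLaw n p {X | τ ^ 2 * ∑ i, X i j ^ 2 ≤ σ ^ 2} ≤
      jointLaw n p ε τ (signError est j) := by
  have := isProbabilityMeasure_coordLaw (τ := τ) hε.le hε1
  have : IsProbabilityMeasure (signalLaw p ε τ) := by rw [signalLaw_eq_pi]; infer_instance
  have hG : MeasurableSet {X : Fin n → Fin p → ℝ | τ ^ 2 * ∑ i, X i j ^ 2 ≤ σ ^ 2} :=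
    measurableSet_le (by fun_prop) (by fun_prop)
  rw [jointLaw, Measure.prod_apply (measurableSet_signError hest j),
    ← lintegral_indicator_const hG]
  refine lintegral_mono fun X ↦ Set.indicator_apply_le' (fun hX ↦ ?_) fun _ ↦ zero_le
  exact mul_missProb_le_measure_signError_section hest j hε hε1 hτ hσ hX

theorem mul_missProb_le_expHamming (hn : 0 < n)
    (hest : Measurable fun yx : (Fin n → ℝ) × (Fin n → Fin p → ℝ) ↦ est yx.1 yx.2)
    (hε : 0 < ε) (hε1 : ε ≤ 1) (hτ : 0 < τ) {σ η : ℝ} (hσ : 0 < σ) (hη : 0 < η)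
    (hτσ : τ ^ 2 * (1 + η) ≤ σ ^ 2) :
    ENNReal.ofReal (p * (ε * (1 - ε) * missProb ε σ *
        (1 - Var[fun x ↦ x ^ 2; gaussianReal 0 1] / (n * η ^ 2)))) ≤ expHamming n p ε τ est := by
  have hrisk : 0 ≤ ε * (1 - ε) * missProb ε σ :=
    mul_nonneg (mul_nonneg hε.le (sub_nonneg.2 hε1)) (missProb_nonneg _ _)
  have hcoord (j : Fin p) : ENNReal.ofReal (ε * (1 - ε) * missProb ε σ *
        (1 - Var[fun x ↦ x ^ 2; gaussianReal 0 1] / (n * η ^ 2))) ≤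
      jointLaw n p ε τ (signError est j) := by
    rw [ENNReal.ofReal_mul hrisk]
    refine le_trans ?_ (mul_missProb_mul_designLaw_le_jointLaw_signError hest j hε hε1 hτ hσ)
    gcongr
    refine (one_sub_variance_div_le_designLaw_column_sq_lt hn j hη).trans
      (measure_mono fun X hX ↦ ?_)
    exact (mul_le_mul_of_nonneg_left (le_of_lt hX) (sq_nonneg τ)).trans hτσ
  rw [ENNReal.ofReal_mul p.cast_nonneg, ENNReal.ofReal_natCast]
  calc _ = ∑ _j : Fin p, ENNReal.ofReal (ε * (1 - ε) * missProb ε σ *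
        (1 - Var[fun x ↦ x ^ 2; gaussianReal 0 1] / (n * η ^ 2))) := by simp
    _ ≤ _ := Finset.sum_le_sum fun j _ ↦ hcoord j

end VariableSelection

section Calibration

theorem missProb_rpow_sqrt_log {x ϑ ρ : ℝ} (hx : 1 < x) (hρ : 0 < ρ) :
    missProb (x ^ (-ϑ)) (√(2 * ρ * Real.log x)) =
      cdf (gaussianReal 0 1) ((ϑ - ρ) / √(2 * ρ) * √(Real.log x)) := by
  have hlog : 0 < √(Real.log x) := Real.sqrt_pos.2 (Real.log_pos hx)
  have hlog_sq : √(Real.log x) ^ 2 = Real.log x := Real.sq_sqrt (Real.log_pos hx).le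
  have hρ_sq : √(2 * ρ) ^ 2 = 2 * ρ := Real.sq_sqrt (by positivity)
  rw [missProb, Real.log_rpow (by linarith), Real.sqrt_mul (by positivity), ← hlog_sq,
    Real.sqrt_sq hlog.le]
  congr 1
  field_simp
  rw [hρ_sq]
  ring

variable {p : ℕ → ℕ} {bhat : ∀ n, (Fin n → ℝ) → (Fin n → Fin (p n) → ℝ) → Fin (p n) → ℝ}
  {ϑ r : ℝ}

-- The column norms are only approximately `1`, so `ρ` has to exceed the signal strength `r`.
theorem eventually_mul_cdf_le_expHamming (hϑ : 0 < ϑ) (hr : 0 < r) (hp : Tendsto p atTop atTop)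
    (hmeas : ∀ n, Measurable fun yx : (Fin n → ℝ) × (Fin n → Fin (p n) → ℝ) ↦ bhat n yx.1 yx.2)
    {ρ c : ℝ} (hρ : r < ρ) (hc : c < 1) :
    ∀ᶠ n in atTop, ENNReal.ofReal (c * (p n : ℝ) ^ (1 - ϑ) *
        cdf (gaussianReal 0 1) ((ϑ - ρ) / √(2 * ρ) * √(Real.log (p n)))) ≤
      expHamming n (p n) ((p n : ℝ) ^ (-ϑ)) (√(2 * r * Real.log (p n))) (bhat n) := by
  set C := Var[fun x ↦ x ^ 2; gaussianReal 0 1]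
  set η := ρ / r - 1 with hη
  have hη0 : 0 < η := sub_pos.2 ((one_lt_div hr).2 hρ)
  have hρ0 : 0 < ρ := hr.trans hρ
  have hpR : Tendsto (fun n ↦ (p n : ℝ)) atTop atTop := tendsto_natCast_atTop_atTop.comp hp
  have hlim : Tendsto (fun n : ℕ ↦ (1 - (p n : ℝ) ^ (-ϑ)) * (1 - C / (n * η ^ 2))) atTop
      (𝓝 1) := by
    have hε : Tendsto (fun n ↦ (p n : ℝ) ^ (-ϑ)) atTop (𝓝 0) :=
      (tendsto_rpow_neg_atTop hϑ).comp hpR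
    have hC : Tendsto (fun n : ℕ ↦ C / (n * η ^ 2)) atTop (𝓝 0) :=
      tendsto_const_nhds.div_atTop (tendsto_natCast_atTop_atTop.atTop_mul_const (by positivity))
    simpa using (hε.const_sub 1).mul (hC.const_sub 1)
  filter_upwards [hlim.eventually_const_le hc, hpR.eventually_gt_atTop 1,
    eventually_gt_atTop 0] with n hcn hpn hn
  have hpn0 : (0 : ℝ) < p n := one_pos.trans hpn
  have hlog : 0 < Real.log (p n) := Real.log_pos hpn
  have hτσ : √(2 * r * Real.log (p n)) ^ 2 * (1 + η) ≤ √(2 * ρ * Real.log (p n)) ^ 2 := by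
    rw [Real.sq_sqrt (by positivity), Real.sq_sqrt (by positivity), hη]
    exact le_of_eq (by field_simp; ring)
  refine le_trans (ENNReal.ofReal_le_ofReal ?_) (mul_missProb_le_expHamming hn (hmeas n)
    (Real.rpow_pos_of_pos hpn0 _) (Real.rpow_le_one_of_one_le_of_nonpos hpn.le (by linarith))
    (Real.sqrt_pos.2 (by positivity)) (Real.sqrt_pos.2 (by positivity)) hη0 hτσ)
  rw [missProb_rpow_sqrt_log hpn hρ0, sub_eq_add_neg 1 ϑ, Real.rpow_add hpn0, Real.rpow_one]
  set Φ := cdf (gaussianReal 0 1) ((ϑ - ρ) / √(2 * ρ) * √(Real.log (p n)))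
  have hΦ : 0 ≤ Φ := cdf_nonneg _ _
  calc c * (p n * (p n : ℝ) ^ (-ϑ)) * Φ
      ≤ (1 - (p n : ℝ) ^ (-ϑ)) * (1 - C / (n * η ^ 2)) * (p n * (p n : ℝ) ^ (-ϑ)) * Φ := by
        gcongr
    _ = _ := by ring

theorem exists_gt_sq_div_sqrt_lt (hr : 0 < r) {δ : ℝ} (hδ : 0 < δ) :
    ∃ ρ > r, ((ϑ - ρ) / √(2 * ρ)) ^ 2 / 2 < (r - ϑ) ^ 2 / (4 * r) + δ := by
  have hcont : ContinuousAt (fun ρ ↦ ((ϑ - ρ) / √(2 * ρ)) ^ 2 / 2) r := by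
    have : √(2 * r) ≠ 0 := (Real.sqrt_pos.2 (by positivity)).ne'
    fun_prop (disch := assumption)
  have hval : ((ϑ - r) / √(2 * r)) ^ 2 / 2 = (r - ϑ) ^ 2 / (4 * r) := by
    rw [div_pow, Real.sq_sqrt (by positivity)]
    field_simp
    ring
  have hlt := hcont.eventually_lt_const (hval.trans_lt (lt_add_of_pos_right _ hδ))
  obtain ⟨ρ, hρ, hrρ⟩ :=
    ((hlt.filter_mono nhdsWithin_le_nhds).and (eventually_mem_nhdsWithin (s := Set.Ioi r))).exists
  exact ⟨ρ, hrρ, hρ⟩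

theorem eventually_rpow_le_expHamming (hϑ : 0 < ϑ) (hr : 0 < r) (hp : Tendsto p atTop atTop)
    (hmeas : ∀ n, Measurable fun yx : (Fin n → ℝ) × (Fin n → Fin (p n) → ℝ) ↦ bhat n yx.1 yx.2)
    {δ : ℝ} (hδ : 0 < δ) :
    ∀ᶠ n in atTop, ENNReal.ofReal ((p n : ℝ) ^ (1 - (ϑ + r) ^ 2 / (4 * r) - δ)) ≤
      expHamming n (p n) ((p n : ℝ) ^ (-ϑ)) (√(2 * r * Real.log (p n))) (bhat n) := by
  obtain ⟨ρ, hρ, hγ⟩ := exists_gt_sq_div_sqrt_lt (ϑ := ϑ) hr hδ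
  set γ := (r - ϑ) ^ 2 / (4 * r) + δ with hγdef
  have hexp : 1 - (ϑ + r) ^ 2 / (4 * r) - δ = (1 - ϑ) - γ := by
    rw [hγdef]; field_simp; ring
  have hpR : Tendsto (fun n ↦ (p n : ℝ)) atTop atTop := tendsto_natCast_atTop_atTop.comp hp
  have hs : Tendsto (fun n ↦ √(Real.log (p n))) atTop atTop :=
    Real.tendsto_sqrt_atTop.comp (Real.tendsto_log_atTop.comp hpR)
  filter_upwards [eventually_mul_cdf_le_expHamming hϑ hr hp hmeas hρ one_half_lt_one,
    hs.eventually (eventually_exp_neg_mul_sq_le_mul_cdf_gaussianReal hγ one_half_pos),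
    hpR.eventually_gt_atTop 1] with n hn htail hpn
  have hpn0 : (0 : ℝ) < p n := one_pos.trans hpn
  refine le_trans (ENNReal.ofReal_le_ofReal ?_) hn
  rw [Real.sq_sqrt (Real.log_pos hpn).le] at htail
  calc (p n : ℝ) ^ (1 - (ϑ + r) ^ 2 / (4 * r) - δ)
      = (p n : ℝ) ^ (1 - ϑ) * Real.exp (-(γ * Real.log (p n))) := by
        rw [hexp, sub_eq_add_neg (1 - ϑ) γ, Real.rpow_add hpn0,
          Real.rpow_def_of_pos hpn0 (-γ), mul_neg, mul_comm γ]
    _ ≤ (p n : ℝ) ^ (1 - ϑ) * (1 / 2 *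
          cdf (gaussianReal 0 1) ((ϑ - ρ) / √(2 * ρ) * √(Real.log (p n)))) := by gcongr
    _ = _ := by ring

theorem one_le_liminf_expHamming_div_rpow (hr : 0 < r) (hrϑ : r < ϑ)
    (hp : Tendsto p atTop atTop)
    (hmeas : ∀ n, Measurable fun yx : (Fin n → ℝ) × (Fin n → Fin (p n) → ℝ) ↦ bhat n yx.1 yx.2) :
    1 ≤ liminf (fun n ↦
      expHamming n (p n) ((p n : ℝ) ^ (-ϑ)) (√(2 * r * Real.log (p n))) (bhat n) /
        ENNReal.ofReal ((p n : ℝ) ^ (1 - ϑ))) atTop := by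
  obtain ⟨ρ, hρ, hρϑ⟩ := exists_between hrϑ
  have ha : 0 < (ϑ - ρ) / √(2 * ρ) :=
    div_pos (sub_pos.2 hρϑ) (Real.sqrt_pos.2 (by linarith))
  have hpR : Tendsto (fun n ↦ (p n : ℝ)) atTop atTop := tendsto_natCast_atTop_atTop.comp hp
  have hΦ : Tendsto (fun n ↦
      cdf (gaussianReal 0 1) ((ϑ - ρ) / √(2 * ρ) * √(Real.log (p n)))) atTop (𝓝 1) :=
    (tendsto_cdf_atTop _).comp <|
      (Real.tendsto_sqrt_atTop.comp (Real.tendsto_log_atTop.comp hpR)).const_mul_atTop ha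
  refine le_of_forall_lt_imp_le_of_dense fun a ha1 ↦ le_liminf_of_le (by isBoundedDefault) ?_
  lift a to ℝ≥0 using ha1.ne_top
  obtain ⟨c, hac, hc1⟩ := exists_between (show (a : ℝ) < 1 by exact_mod_cast ha1)
  have hcΦ : ∀ᶠ n in atTop, (a : ℝ) ≤
      c * cdf (gaussianReal 0 1) ((ϑ - ρ) / √(2 * ρ) * √(Real.log (p n))) :=
    (hΦ.const_mul c).eventually_const_le (by rwa [mul_one])
  filter_upwards [eventually_mul_cdf_le_expHamming (hr.trans hrϑ) hr hp hmeas hρ hc1, hcΦ,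
    hpR.eventually_gt_atTop 0] with n hn han hpn
  have hpos : 0 < (p n : ℝ) ^ (1 - ϑ) := Real.rpow_pos_of_pos hpn _
  rw [ENNReal.le_div_iff_mul_le (.inl (ENNReal.ofReal_pos.2 hpos).ne')
    (.inl ENNReal.ofReal_ne_top), ← ENNReal.ofReal_coe_nnreal, ← ENNReal.ofReal_mul a.coe_nonneg]
  refine le_trans (ENNReal.ofReal_le_ofReal ?_) hn
  rw [mul_right_comm]
  gcongr

end Calibration

theorem stmt_9_general {ϑ r : ℝ} (hϑ : 0 < ϑ) (hr : 0 < r) {p : ℕ → ℕ}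
    (hp : Tendsto p atTop atTop)
    {bhat : ∀ n, (Fin n → ℝ) → (Fin n → Fin (p n) → ℝ) → Fin (p n) → ℝ}
    (hmeas : ∀ n, Measurable fun yx : (Fin n → ℝ) × (Fin n → Fin (p n) → ℝ) ↦
      bhat n yx.1 yx.2) :
    (∀ δ > 0, ∀ᶠ n in atTop,
      ENNReal.ofReal ((p n : ℝ) ^ (1 - (ϑ + r) ^ 2 / (4 * r) - δ)) ≤
        expHamming n (p n) ((p n : ℝ) ^ (-ϑ)) (√(2 * r * Real.log (p n))) (bhat n)) ∧
    (r < ϑ → 1 ≤ liminf (fun n ↦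
      expHamming n (p n) ((p n : ℝ) ^ (-ϑ)) (√(2 * r * Real.log (p n))) (bhat n) /
        ENNReal.ofReal ((p n : ℝ) ^ (1 - ϑ))) atTop) :=
  ⟨fun _ hδ ↦ eventually_rpow_le_expHamming hϑ hr hp hmeas hδ,
    fun hrϑ ↦ one_le_liminf_expHamming_div_rpow hr hrϑ hp hmeas⟩

/-- Theorem 5 of the paper, the lower bound. Fix `ϑ ∈ (0,1)`, `θ > 0`,
`r > 0` with `θ > 2(1−ϑ)`; calibrate `p → ∞`, `log n / log p → θ`, `ε_n = p^{−ϑ}`,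
`τ_n = √(2 r log p)`. For any sequence of measurable selection procedures `β̂⁽ⁿ⁾`, the
expected Hamming distance satisfies: for `r ≥ ϑ`, `d*_n ≥ p^{1−(ϑ+r)²/(4r)−δ}` eventually,
for every `δ > 0`; and for `0 < r < ϑ`, `liminf d*_n / p^{1−ϑ} ≥ 1`. -/
theorem stmt_9 (ϑ θ r : ℝ) (hϑ : ϑ ∈ Set.Ioo (0 : ℝ) 1) (hθ : 0 < θ) (hr : 0 < r)
    (hθ2 : 2 * (1 - ϑ) < θ)
    (p : ℕ → ℕ) (hp : Tendsto p atTop atTop)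
    (hnp : Tendsto (fun n : ℕ => Real.log n / Real.log (p n)) atTop (𝓝 θ))
    (bhat : ∀ n : ℕ, (Fin n → ℝ) → (Fin n → Fin (p n) → ℝ) → Fin (p n) → ℝ)
    (hmeas : ∀ n, Measurable fun yx : (Fin n → ℝ) × (Fin n → Fin (p n) → ℝ) =>
      bhat n yx.1 yx.2) :
    (ϑ ≤ r → ∀ δ : ℝ, 0 < δ → ∀ᶠ n in atTop,
      ENNReal.ofReal ((p n : ℝ) ^ (1 - (ϑ + r) ^ 2 / (4 * r) - δ)) ≤
        expHamming n (p n) ((p n : ℝ) ^ (-ϑ)) (Real.sqrt (2 * r * Real.log (p n)))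
          (bhat n)) ∧
    (r < ϑ → 1 ≤ Filter.liminf
      (fun n =>
        expHamming n (p n) ((p n : ℝ) ^ (-ϑ)) (Real.sqrt (2 * r * Real.log (p n)))
            (bhat n) /
          ENNReal.ofReal ((p n : ℝ) ^ (1 - ϑ)))
      atTop) :=
  have h := stmt_9_general hϑ.1 hr hp hmeas
  ⟨fun _ ↦ h.1, h.2⟩
end

section
/- Let C_SS be an s×s real symmetric positive definite matrix such that the all-ones vector 1_S ∈ ℝ^s is an eigenvector of C_SS, say C_SS 1_S = μ 1_S with μ > 0, and let C_NS be any real m×s matrix. Then the componentwise inequality |C_NS C_SS^{-1} 1_S| ≤ 1_S (the lasso irrepresentable condition (C1) for β_S ∝ 1_S) holds if and only if the componentwise inequality |C_NS 1_S| ≤ |C_SS 1_S| (the marginal regression faithfulness condition (C2) for β_S ∝ 1_S) holds. -/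
open Matrix

/-!
Multiplying `A v = μ v` by `B A⁻¹` gives `B v = μ (B A⁻¹ v)`, so the two vectors compared with
`1` and with `|A v|` differ by the factor `μ`. When every entry of `v` has absolute value `1`, all
entries of `|A v|` equal `|μ|`, and cancelling `|μ|` turns one condition into the other.
-/

section Eigenvector

variable {R n o : Type*} [CommRing R] [Fintype n] [DecidableEq n]
  {A : Matrix n n R} {v : n → R} {μ : R}

theorem mulVec_eq_smul_mul_inv_mulVec (B : Matrix o n R) (hA : IsUnit A)
    (hv : A *ᵥ v = μ • v) : B *ᵥ v = μ • ((B * A⁻¹) *ᵥ v) := by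
  rw [← mulVec_smul, ← hv, mulVec_mulVec,
    nonsing_inv_mul_cancel_right _ _ ((isUnit_iff_isUnit_det A).mp hA)]

theorem eigenvalue_ne_zero_of_isUnit (hA : IsUnit A) (hv : A *ᵥ v = μ • v) (hv₀ : v ≠ 0) :
    μ ≠ 0 := by
  rintro rfl
  refine hv₀ (mulVec_injective_of_isUnit hA ?_)
  rw [hv, zero_smul, mulVec_zero]

end Eigenvector

theorem stmt_16_general {R n o : Type*} [CommRing R] [LinearOrder R] [IsStrictOrderedRing R]
    [Fintype n] [DecidableEq n] {A : Matrix n n R} (B : Matrix o n R) {v : n → R} {μ : R}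
    (hA : IsUnit A) (hv : A *ᵥ v = μ • v) (habs : ∀ j, |v j| = 1) :
    (∀ i, |((B * A⁻¹) *ᵥ v) i| ≤ 1) ↔ ∀ i j, |(B *ᵥ v) i| ≤ |(A *ᵥ v) j| := by
  have abs_B (i : o) : |(B *ᵥ v) i| = |μ| * |((B * A⁻¹) *ᵥ v) i| := by
    rw [mulVec_eq_smul_mul_inv_mulVec B hA hv, Pi.smul_apply, smul_eq_mul, abs_mul]
  have abs_A (j : n) : |(A *ᵥ v) j| = |μ| := by
    rw [hv, Pi.smul_apply, smul_eq_mul, abs_mul, habs, mul_one]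
  rcases isEmpty_or_nonempty n with _ | _
  · simp [mulVec_eq_sum]
  · have hv₀ : v ≠ 0 := fun h ↦ by simp [h] at habs
    have hμ : 0 < |μ| := abs_pos.mpr (eigenvalue_ne_zero_of_isUnit hA hv hv₀)
    simp only [abs_B, abs_A, mul_le_iff_le_one_right hμ, forall_const]

/-- Let `C_SS` be an `s × s` real symmetric positive definite matrix having
the all-ones vector as an eigenvector, `C_SS 1 = μ 1` with `μ > 0`, and let `C_NS` be any
`m × s` real matrix. Then the componentwise inequality `|C_NS C_SS⁻¹ 1| ≤ 1` (lasso
irrepresentable condition for `β_S ∝ 1_S`) holds if and only if the componentwise inequality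
`|C_NS 1| ≤ |C_SS 1|` (marginal regression faithfulness condition for `β_S ∝ 1_S`) holds. -/
theorem stmt_16 {s m : ℕ} (Css : Matrix (Fin s) (Fin s) ℝ)
    (Cns : Matrix (Fin m) (Fin s) ℝ) (hpd : Css.PosDef)
    (μ : ℝ) (hμ : 0 < μ)
    (heig : Css.mulVec (fun _ => 1) = fun _ => μ) :
    ((∀ i, |(Cns * Css⁻¹).mulVec (fun _ => 1) i| ≤ 1) ↔
      (∀ i j, |Cns.mulVec (fun _ => 1) i| ≤ |Css.mulVec (fun _ => 1) j|)) := by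
  have heig' : Css *ᵥ (fun _ => 1) = μ • (fun _ => 1) := by simpa [funext_iff] using heig
  exact stmt_16_general Cns hpd.isUnit heig' fun _ => abs_one
end
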